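/- arXiv:1012.1797 — 3 statements merged into one kernel-verified Lean document; each statement's English description precedes it below -/
import Mathlib

section
/- Fix 0 < ε < 1 and 2 ≤ σ ≤ k. Then z_{λ^σ} = [z_{λ^σ}[1] ∧ ⋯ ∧ z_{λ^σ}[k]], where z_{λ^σ}[i] ∈ Sym^{≤k}ℂ^k is the sum, over all ordered tuples (i_1,…,i_s) of positive integers with i_1+⋯+i_s = i and ⌊i_1/σ⌋+⋯+⌊i_s/σ⌋ = ⌊i/σ⌋, of e_{i_1}⋯e_{i_s}; and z_{μ^σ} = [z_{μ^σ}[1] ∧ ⋯ ∧ z_{μ^σ}[k]], where z_{μ^σ}[i] is the sum, over all ordered tuples (i_1,…,i_s) of positive integers with i_1+⋯+i_s = i and no i_j equal to σ, of e_{i_1}⋯e_{i_s}. -/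
open scoped BigOperators

namespace JetPaper

/-- Monomials in `n` variables of degree between `1` and `k`:
these index the standard basis of `Sym^{≤k}ℂ^n = ⊕_{l=1}^k Sym^l ℂ^n`. -/
def Mon (n k : ℕ) : Type := {m : Fin n → ℕ // 0 < ∑ i, m i ∧ ∑ i, m i ≤ k}

noncomputable instance (n k : ℕ) : Fintype (Mon n k) :=
  Fintype.ofInjective
    (fun m : Mon n k => (fun i => (⟨m.1 i, Nat.lt_succ_of_le
        ((Finset.single_le_sum (fun _ _ => Nat.zero_le _) (Finset.mem_univ i)).trans
          m.2.2)⟩ : Fin (k + 1))))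
    (fun _ _ h => Subtype.ext (funext fun i => congrArg Fin.val (congrFun h i)))

/-- The matrix coefficient of the `GL(n)`-action on `Sym^{≤k}ℂ^n` induced by the standard
action on `ℂ^n` (`g·e_i = ∑_j g_{ji} e_j`), in the monomial basis:
`symMat g m m'` is the coefficient of the monomial `m` in the image of the monomial `m'`. -/
noncomputable def symMat {n k : ℕ} (g : Matrix (Fin n) (Fin n) ℂ) (m m' : Mon n k) : ℂ :=
  MvPolynomial.coeff (Finsupp.equivFunOnFinite.symm m.1)
    (∏ i : Fin n, (∑ j : Fin n, g j i • MvPolynomial.X j) ^ (m'.1 i))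

/-- The induced action of `g ∈ GL(n)` on `(Sym^{≤k}ℂ^n)^{⊗k}`, in coordinates.
Elements of the `k`-th tensor power of `Sym^{≤k}ℂ^n` are recorded by their coordinates
in the basis indexed by `k`-tuples of monomials; `⋀^k(Sym^{≤k}ℂ^n)` is realised inside the
tensor power as the space of antisymmetric tensors. -/
noncomputable def actV {n k : ℕ} (g : Matrix (Fin n) (Fin n) ℂ)
    (T : (Fin k → Mon n k) → ℂ) : (Fin k → Mon n k) → ℂ :=
  fun mf => ∑ mf' : Fin k → Mon n k, (∏ i, symMat g (mf i) (mf' i)) * T mf'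

/-- The wedge product `v₁ ∧ ⋯ ∧ v_k` of `k` elements of `Sym^{≤k}ℂ^n`, realised as an
antisymmetric tensor in `(Sym^{≤k}ℂ^n)^{⊗k}` (in coordinates). -/
noncomputable def wedge {n k : ℕ} (v : Fin k → (Mon n k → ℂ)) : (Fin k → Mon n k) → ℂ :=
  fun mf => ∑ σ : Equiv.Perm (Fin k), ((Equiv.Perm.sign σ : ℤ) : ℂ) * ∏ i, v (σ i) (mf i)

/-- The `j`-th coordinate polynomial of `φ(γ) ∈ Hom(ℂ^k, Sym^{≤k}ℂ^n)` for
`γ ∈ Hom(ℂ^k, ℂ^n)`: the sum over all `s ≥ 1` and all ordered `s`-tuples `(i₁,…,i_s)` of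
positive integers with `i₁+⋯+i_s = j` of the product (in the symmetric algebra,
realised as the polynomial ring in `n` variables) of the `i₁`-th, …, `i_s`-th columns
of `γ`.  A tuple of length `s = l+1` is recorded as a function `a : Fin (l+1) → Fin k`,
the value `a t` standing for the positive integer `(a t) + 1`. -/
noncomputable def colPoly {n k : ℕ} (γ : Matrix (Fin n) (Fin k) ℂ) (j : Fin k) :
    MvPolynomial (Fin n) ℂ :=
  ∑ l : Fin k, ∑ a : Fin (l.val + 1) → Fin k,
    if (∑ t, ((a t).val + 1)) = j.val + 1 then
      ∏ t, (∑ i : Fin n, γ i (a t) • MvPolynomial.X i)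
    else 0

/-- The map `φ : Hom(ℂ^k,ℂ^n) → Hom(ℂ^k, Sym^{≤k}ℂ^n)` as a matrix in the monomial basis:
rows are indexed by monomials, columns by `Fin k`. -/
noncomputable def phiMat {n k : ℕ} (γ : Matrix (Fin n) (Fin k) ℂ) :
    Matrix (Mon n k) (Fin k) ℂ :=
  fun m j => MvPolynomial.coeff (Finsupp.equivFunOnFinite.symm m.1) (colPoly γ j)

/-- `φ^{Proj}` at the level of vectors: the wedge `φ(γ)e₁ ∧ ⋯ ∧ φ(γ)e_k` of the columns of
`φ(γ)`, an element of `⋀^k(Sym^{≤k}ℂ^n)` in coordinates. -/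
noncomputable def wedgePhi {n k : ℕ} (γ : Matrix (Fin n) (Fin k) ℂ) :
    (Fin k → Mon n k) → ℂ :=
  wedge (fun j m => phiMat γ m j)

/-- The matrix of the reparametrization jet with parameters `α = (α₁,…,α_k)`
(`α_s` is recorded as `α ⟨s-1⟩`): the `(i,j)` entry is
`∑_{s₁+⋯+s_i = j, s_l ≥ 1} α_{s₁}⋯α_{s_i}` (rows and columns of `Fin k` represent
the integers `1,…,k`). -/
noncomputable def repMat (k : ℕ) (α : Fin k → ℂ) : Matrix (Fin k) (Fin k) ℂ :=
  fun i j => ∑ a : Fin (i.val + 1) → Fin k,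
    if (∑ t, ((a t).val + 1)) = j.val + 1 then ∏ t, α (a t) else 0

/-- The reparametrization group `𝔾_k ⊂ GL(k,ℂ)`. -/
def Gset (k : ℕ) : Set (Matrix (Fin k) (Fin k) ℂ) :=
  {g | ∃ α : Fin k → ℂ, (∀ i : Fin k, i.val = 0 → α i ≠ 0) ∧ g = repMat k α}

/-- The unipotent radical `𝕌_k ⊂ 𝔾_k`: the matrices `repMat k α` with `α₁ = 1`. -/
def Uset (k : ℕ) : Set (Matrix (Fin k) (Fin k) ℂ) :=
  {g | ∃ α : Fin k → ℂ, (∀ i : Fin k, i.val = 0 → α i = 1) ∧ g = repMat k α}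

/-- The distinguished point
`p_k = e₁ ∧ (e₂ + e₁²) ∧ ⋯ ∧ (∑_{i₁+⋯+i_s = k} e_{i₁}⋯e_{i_s}) ∈ ⋀^k(Sym^{≤k}ℂ^k)`,
i.e. the wedge of the columns of `φ(1)`. -/
noncomputable def pkVec (k : ℕ) : (Fin k → Mon k k) → ℂ :=
  wedgePhi (1 : Matrix (Fin k) (Fin k) ℂ)


/-- Coordinates on `⋀^k(Sym^{≤k}ℂ^k)`, realised inside `(Sym^{≤k}ℂ^k)^{⊗k}`. -/
abbrev Vk (k : ℕ) : Type := (Fin k → Mon k k) → ℂ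

/-- The diagonal transformation `ν(t) : e_i ↦ t^{ν_i} e_i` (for a tuple of reals
`ν = (ν₁,…,ν_k)` and `t > 0`) acting on `⋀^k(Sym^{≤k}ℂ^k)`: a monomial `m` is scaled
by `t^{∑_j ν_j m_j}`. -/
noncomputable def nuAct {k : ℕ} (ν : Fin k → ℝ) (t : ℝ) (T : Vk k) : Vk k :=
  fun mf => ((∏ i, t ^ (∑ j : Fin k, ν j * ((mf i).1 j : ℝ)) : ℝ) : ℂ) * T mf

/-- The weights `λ^σ_i = i − ⌊i/σ⌋ε` (`1`-based index `i`). -/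
noncomputable def lamW (ε : ℝ) (σ i : ℕ) : ℝ := (i : ℝ) - ((i / σ : ℕ) : ℝ) * ε

/-- The one-parameter family `λ^σ`, as a tuple of weights on `Fin k`
(the index `i : Fin k` represents the integer `i+1`). -/
noncomputable def lamS (k : ℕ) (ε : ℝ) (σ : ℕ) : Fin k → ℝ :=
  fun i => lamW ε σ ((i : ℕ) + 1)

/-- The one-parameter family `μ^σ`: `μ^σ_i = i` for `i ≠ σ` and `μ^σ_σ = σ + ε`. -/
noncomputable def muS (k : ℕ) (ε : ℝ) (σ : ℕ) : Fin k → ℝ :=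
  fun i => if (i : ℕ) + 1 = σ then (σ : ℝ) + ε else ((i : ℕ) + 1 : ℝ)

/-- `z_{λ^σ}[i] ∈ Sym^{≤k}ℂ^k`: the sum, over all ordered tuples `(i₁,…,i_s)` of positive
integers with `i₁+⋯+i_s = i` and `⌊i₁/σ⌋+⋯+⌊i_s/σ⌋ = ⌊i/σ⌋`, of `e_{i₁}⋯e_{i_s}`.
In coordinates: the coefficient of a monomial `m` is the number of such ordered tuples
whose product is `m`, i.e. the multinomial coefficient of `m`, when `m` has weight `i`
and defect `⌊i/σ⌋`, and `0` otherwise. -/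
noncomputable def zLamPart (k σ i : ℕ) : Mon k k → ℂ :=
  fun m =>
    if (∑ j : Fin k, ((j : ℕ) + 1) * m.1 j) = i ∧
        (∑ j : Fin k, (((j : ℕ) + 1) / σ) * m.1 j) = i / σ then
      (Nat.multinomial Finset.univ m.1 : ℂ)
    else 0

/-- `z_{μ^σ}[i] ∈ Sym^{≤k}ℂ^k`: the sum, over all ordered tuples `(i₁,…,i_s)` of positive
integers with `i₁+⋯+i_s = i` and no entry equal to `σ`, of `e_{i₁}⋯e_{i_s}`. -/
noncomputable def zMuPart (k σ i : ℕ) : Mon k k → ℂ :=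
  fun m =>
    if (∑ j : Fin k, ((j : ℕ) + 1) * m.1 j) = i ∧
        (∀ j : Fin k, (j : ℕ) + 1 = σ → m.1 j = 0) then
      (Nat.multinomial Finset.univ m.1 : ℂ)
    else 0

/-- The vector `z_{λ^σ}[1] ∧ ⋯ ∧ z_{λ^σ}[k] ∈ ⋀^k(Sym^{≤k}ℂ^k)`. -/
noncomputable def zLamVec (k σ : ℕ) : Vk k := wedge (fun i => zLamPart k σ ((i : ℕ) + 1))

/-- The vector `z_{μ^σ}[1] ∧ ⋯ ∧ z_{μ^σ}[k] ∈ ⋀^k(Sym^{≤k}ℂ^k)`. -/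
noncomputable def zMuVec (k σ : ℕ) : Vk k := wedge (fun i => zMuPart k σ ((i : ℕ) + 1))

/-- `w` represents the limit point `z_ν = lim_{t→0} ν(t)·[p_k]` in `ℙ(⋀^k(Sym^{≤k}ℂ^k))`:
for a suitable normalising exponent `e`, the rescaled vectors `t^{-e}·ν(t)·p_k`
converge to `w` as `t → 0⁺`. -/
noncomputable def IsProjLimit {k : ℕ} (ν : Fin k → ℝ) (w : Vk k) : Prop :=
  ∃ e : ℝ, Filter.Tendsto (fun t : ℝ => ((t ^ (-e) : ℝ) : ℂ) • nuAct ν t (pkVec k))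
    (nhdsWithin 0 (Set.Ioi 0)) (nhds w)

lemma aux_phi (k : ℕ) (m : Mon k k) (j : Fin k) :
    phiMat (1 : Matrix (Fin k) (Fin k) ℂ) m j =
      if (∑ i : Fin k, ((i : ℕ) + 1) * m.1 i) = (j : ℕ) + 1 then
        (Nat.multinomial Finset.univ m.1 : ℂ) else 0 := by
  classical
  set M : Fin k →₀ ℕ := Finsupp.equivFunOnFinite.symm m.1 with hM
  have hX : ∀ a : Fin k, (∑ i : Fin k, (1 : Matrix (Fin k) (Fin k) ℂ) i a •
      (MvPolynomial.X i : MvPolynomial (Fin k) ℂ)) = MvPolynomial.X a := by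
    intro a
    rw [Finset.sum_eq_single a]
    · simp
    · intro b _ hb; simp [Matrix.one_apply, hb]
    · simp
  have hprod : ∀ (n : ℕ) (a : Fin n → Fin k),
      (∏ t, (MvPolynomial.X (a t) : MvPolynomial (Fin k) ℂ)) =
        MvPolynomial.monomial (∑ t, Finsupp.single (a t) 1) 1 := by
    intro n a
    rw [MvPolynomial.monomial_sum_one]; rfl
  have hwt : ∀ (n : ℕ) (a : Fin n → Fin k), (∑ t, Finsupp.single (a t) 1) = M →
      (∑ t, ((a t).val + 1)) = ∑ i : Fin k, ((i : ℕ) + 1) * m.1 i := by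
    intro n a h
    have h1 : ∀ i, m.1 i = ∑ t, (Finsupp.single (a t) 1 : Fin k →₀ ℕ) i := by
      intro i
      have := DFunLike.congr_fun h i
      rw [Finsupp.finsetSum_apply] at this
      rw [this]; rfl
    simp_rw [h1, Finset.mul_sum]
    rw [Finset.sum_comm]
    refine Finset.sum_congr rfl fun t _ => ?_
    rw [Finset.sum_eq_single (a t)]
    · simp
    · intro b _ hb; simp [Finsupp.single_apply, hb.symm]
    · simp
  have hpow : ∀ n : ℕ, (∑ a : Fin n → Fin k, MvPolynomial.coeff M
      (∏ t, (MvPolynomial.X (a t) : MvPolynomial (Fin k) ℂ))) =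
      if (∑ i, m.1 i) = n then (Nat.multinomial Finset.univ m.1 : ℂ) else 0 := by
    intro n
    rw [← MvPolynomial.coeff_sum]
    have h2 : (∑ a : Fin n → Fin k, ∏ t, (MvPolynomial.X (a t) : MvPolynomial (Fin k) ℂ)) =
        (∑ i : Fin k, MvPolynomial.X i) ^ n := by
      have := Finset.prod_univ_sum (fun _ : Fin n => (Finset.univ : Finset (Fin k)))
        (fun _ i => (MvPolynomial.X i : MvPolynomial (Fin k) ℂ))
      simp at this
      rw [this]
    rw [h2, Finset.sum_pow_eq_sum_piAntidiag, MvPolynomial.coeff_sum]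
    have h3 : ∀ x : Fin k → ℕ, MvPolynomial.coeff M ((Nat.multinomial Finset.univ x : MvPolynomial (Fin k) ℂ) *
        ∏ i, (MvPolynomial.X i) ^ x i) = if x = m.1 then (Nat.multinomial Finset.univ x : ℂ) else 0 := by
      intro x
      have h4 : (∏ i, (MvPolynomial.X i : MvPolynomial (Fin k) ℂ) ^ x i) =
          MvPolynomial.monomial (Finsupp.equivFunOnFinite.symm x) 1 := by
        rw [MvPolynomial.monomial_eq, Finsupp.prod_fintype] <;> simp
      rw [h4, ← map_natCast (MvPolynomial.C), MvPolynomial.coeff_C_mul, MvPolynomial.coeff_monomial, hM]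
      simp [Finsupp.equivFunOnFinite.symm.injective.eq_iff]
    simp_rw [h3]
    rw [Finset.sum_ite_eq']
    simp
  have key : ∀ (n : ℕ) (a : Fin n → Fin k), MvPolynomial.coeff M
      (if (∑ t, ((a t).val + 1)) = j.val + 1 then
      ∏ t, (MvPolynomial.X (a t) : MvPolynomial (Fin k) ℂ) else 0) =
      if (∑ i : Fin k, ((i : ℕ) + 1) * m.1 i) = (j : ℕ) + 1 then MvPolynomial.coeff M
      (∏ t, (MvPolynomial.X (a t) : MvPolynomial (Fin k) ℂ)) else 0 := by
    intro n a
    rw [hprod]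
    by_cases h : (∑ t, Finsupp.single (a t) 1) = M
    · rw [hwt n a h]; split_ifs <;> simp
    · split_ifs <;> simp [MvPolynomial.coeff_monomial, h]
  unfold phiMat colPoly
  rw [← hM]
  simp_rw [hX, MvPolynomial.coeff_sum, key]
  by_cases hw : (∑ i : Fin k, ((i : ℕ) + 1) * m.1 i) = (j : ℕ) + 1
  · simp only [hw, if_true]
    simp_rw [hpow]
    obtain ⟨h1, h2⟩ := m.2
    rw [Finset.sum_eq_single (⟨(∑ i, m.1 i) - 1, by omega⟩ : Fin k)]
    · rw [if_pos (by simp only; omega)]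
    · intro b _ hb
      rw [if_neg]
      intro h
      exact hb (Fin.ext (by simp only; omega))
    · simp
  · simp [hw]

lemma aux_limit (k : ℕ) (ν : Fin k → ℝ) (f : Fin k → ℝ) (z : Fin k → Mon k k → ℂ)
    (hle : ∀ (i : Fin k) (m : Mon k k), (∑ j : Fin k, ((j : ℕ) + 1) * m.1 j) = (i : ℕ) + 1 →
      f i ≤ ∑ j : Fin k, ν j * (m.1 j : ℝ))
    (hz : ∀ (i : Fin k) (m : Mon k k), z i m = if (∑ j : Fin k, ((j : ℕ) + 1) * m.1 j) = (i : ℕ) + 1 ∧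
      f i = ∑ j : Fin k, ν j * (m.1 j : ℝ) then (Nat.multinomial Finset.univ m.1 : ℂ) else 0) :
    IsProjLimit ν (wedge z) := by
  refine ⟨∑ i, f i, ?_⟩
  rw [tendsto_pi_nhds]
  intro mf
  have hfac : ∀ (i : Fin k) (m : Mon k k), Filter.Tendsto (fun t : ℝ =>
      ((t ^ ((∑ j : Fin k, ν j * (m.1 j : ℝ)) - f i) : ℝ) : ℂ) *
        phiMat (1 : Matrix (Fin k) (Fin k) ℂ) m i)
      (nhdsWithin 0 (Set.Ioi 0)) (nhds (z i m)) := by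
    intro i m
    rw [aux_phi, hz]
    by_cases hw : (∑ j : Fin k, ((j : ℕ) + 1) * m.1 j) = (i : ℕ) + 1
    · have hl := hle i m hw
      simp only [hw, true_and, if_true]
      split_ifs with he
      · rw [← he]; simp
      · have hpos : 0 < (∑ j : Fin k, ν j * (m.1 j : ℝ)) - f i :=
          sub_pos.2 (lt_of_le_of_ne hl he)
        have h0 : Filter.Tendsto (fun t : ℝ => t ^ ((∑ j : Fin k, ν j * (m.1 j : ℝ)) - f i))
            (nhdsWithin 0 (Set.Ioi 0)) (nhds 0) := by
          have := (Real.continuousAt_rpow_const 0 _ (Or.inr hpos.le)).tendsto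
          rw [Real.zero_rpow hpos.ne'] at this
          exact this.mono_left nhdsWithin_le_nhds
        have h1 := (Complex.continuous_ofReal.tendsto 0).comp h0
        have h2 := h1.mul_const (Nat.multinomial Finset.univ m.1 : ℂ)
        simpa [Function.comp_def] using h2
    · simp [hw]
  have hsum : Filter.Tendsto (fun t : ℝ => ∑ τ : Equiv.Perm (Fin k),
      ((Equiv.Perm.sign τ : ℤ) : ℂ) * ∏ i,
      (((t ^ ((∑ j : Fin k, ν j * ((mf i).1 j : ℝ)) - f (τ i)) : ℝ) : ℂ) *
        phiMat (1 : Matrix (Fin k) (Fin k) ℂ) (mf i) (τ i)))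
      (nhdsWithin 0 (Set.Ioi 0)) (nhds (wedge z mf)) := by
    unfold wedge
    exact tendsto_finsetSum _ fun τ _ =>
      (tendsto_finsetProd _ fun i _ => hfac (τ i) (mf i)).const_mul _
  refine hsum.congr' ?_
  filter_upwards [self_mem_nhdsWithin] with t ht
  have ht : 0 < t := ht
  simp only [Pi.smul_apply, nuAct, pkVec, wedgePhi, wedge, smul_eq_mul]
  rw [← mul_assoc, Finset.mul_sum]
  refine Finset.sum_congr rfl fun τ _ => ?_
  rw [Finset.prod_mul_distrib]
  have : (∏ i, ((t ^ ((∑ j : Fin k, ν j * ((mf i).1 j : ℝ)) - f (τ i)) : ℝ) : ℂ)) =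
      ((t ^ (-∑ i, f i) : ℝ) : ℂ) * ((∏ i, t ^ (∑ j : Fin k, ν j * ((mf i).1 j : ℝ)) : ℝ) : ℂ) := by
    rw [← Complex.ofReal_prod, ← Complex.ofReal_mul]
    congr 1
    rw [← Real.rpow_sum_of_pos ht, ← Real.rpow_sum_of_pos ht, ← Real.rpow_add ht,
      Finset.sum_sub_distrib, Equiv.sum_comp τ f]
    congr 1; ring
  rw [this]; ring

lemma aux_ne (k : ℕ) (z : Fin k → Mon k k → ℂ) 
    (hz : ∀ (i : Fin k) (m : Mon k k), z i m ≠ 0 → (∑ j : Fin k, ((j : ℕ) + 1) * m.1 j) = (i : ℕ) + 1)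
    (hex : ∀ i, ∃ m, z i m ≠ 0) : wedge z ≠ 0 := by
  choose mf hmf using hex
  intro h
  have h1 := congrFun h mf
  simp only [wedge, Pi.zero_apply] at h1
  rw [Finset.sum_eq_single 1] at h1
  · simp [Finset.prod_eq_zero_iff, hmf] at h1
  · intro τ _ hτ
    have : ∃ i, τ i ≠ i := by
      by_contra! hc
      exact hτ (Equiv.ext hc)
    obtain ⟨i, hi⟩ := this
    rw [Finset.prod_eq_zero (Finset.mem_univ i), mul_zero]
    by_contra hne
    have e1 := hz _ _ hne
    have e2 := hz _ _ (hmf i)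
    exact hi (Fin.ext (by omega))
  · simp

lemma aux_mult (k : ℕ) (m : Mon k k) : (Nat.multinomial Finset.univ m.1 : ℂ) ≠ 0 := by
  exact_mod_cast (Nat.multinomial_pos _ _).ne'

/-- the monomial `e_i ^ n` -/
def auxMon (k : ℕ) (i : Fin k) (n : ℕ) (h0 : 0 < n) (h1 : n ≤ k) : Mon k k :=
  ⟨fun j => if j = i then n else 0, by simp [h0, h1]⟩

lemma aux_lam (k σ : ℕ) (ε : ℝ) (m : Mon k k) :
    (∑ j : Fin k, lamS k ε σ j * (m.1 j : ℝ)) =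
      ((∑ j : Fin k, ((j : ℕ) + 1) * m.1 j : ℕ) : ℝ) -
      ((∑ j : Fin k, (((j : ℕ) + 1) / σ) * m.1 j : ℕ) : ℝ) * ε := by
  simp only [lamS, lamW, Nat.cast_sum, Nat.cast_mul]
  rw [Finset.sum_mul, ← Finset.sum_sub_distrib]
  exact Finset.sum_congr rfl fun j _ => by ring

lemma aux_mu (k σ : ℕ) (ε : ℝ) (m : Mon k k) (hs : σ - 1 < k) (h1 : 1 ≤ σ) :
    (∑ j : Fin k, muS k ε σ j * (m.1 j : ℝ)) =
      ((∑ j : Fin k, ((j : ℕ) + 1) * m.1 j : ℕ) : ℝ) + ε * (m.1 ⟨σ - 1, hs⟩ : ℝ) := by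
  have : ε * (m.1 ⟨σ - 1, hs⟩ : ℝ) =
      ∑ j : Fin k, if j = ⟨σ - 1, hs⟩ then ε * (m.1 j : ℝ) else 0 := by simp
  rw [this, Nat.cast_sum, ← Finset.sum_add_distrib]
  refine Finset.sum_congr rfl fun j _ => ?_
  simp only [muS]
  by_cases h : (j : ℕ) + 1 = σ
  · have hj : j = ⟨σ - 1, hs⟩ := Fin.ext (by simp only; omega)
    rw [if_pos h, if_pos hj, ← h]; push_cast; ring
  · have hj : j ≠ ⟨σ - 1, hs⟩ := by
      rintro rfl; exact h (by simp only; omega)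
    rw [if_neg h, if_neg hj]; push_cast; ring

/-- For `0 < ε < 1` and `2 ≤ σ ≤ k`, the limit point
`z_{λ^σ} = lim_{t→0} λ^σ(t)·[p_k]` equals `[z_{λ^σ}[1] ∧ ⋯ ∧ z_{λ^σ}[k]]`, and
`z_{μ^σ} = lim_{t→0} μ^σ(t)·[p_k]` equals `[z_{μ^σ}[1] ∧ ⋯ ∧ z_{μ^σ}[k]]`, with the
explicit factors described in `zLamPart` and `zMuPart`. -/
theorem limit_points_explicit (k σ : ℕ) (ε : ℝ) (hε0 : 0 < ε) (hε1 : ε < 1)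
    (hσ2 : 2 ≤ σ) (hσk : σ ≤ k) :
    (zLamVec k σ ≠ 0 ∧ IsProjLimit (lamS k ε σ) (zLamVec k σ)) ∧
    (zMuVec k σ ≠ 0 ∧ IsProjLimit (muS k ε σ) (zMuVec k σ)) := by
  refine ⟨⟨?_, ?_⟩, ⟨?_, ?_⟩⟩
  · refine aux_ne k _ ?_ ?_
    · intro i m h
      simp only [zLamPart] at h
      split_ifs at h with h1
      · exact h1.1
      · exact absurd rfl h
    · intro i
      refine ⟨auxMon k i 1 one_pos (by omega), ?_⟩
      simp only [zLamPart]
      rw [if_pos]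
      · exact aux_mult k _
      · constructor <;> simp [auxMon]
  · refine aux_limit k _ (fun i => lamW ε σ ((i : ℕ) + 1)) _ ?_ ?_
    · intro i m hw
      have hfl : (∑ j : Fin k, (((j : ℕ) + 1) / σ) * m.1 j) ≤ ((i : ℕ) + 1) / σ := by
        rw [Nat.le_div_iff_mul_le (by omega), ← hw, Finset.sum_mul]
        refine Finset.sum_le_sum fun j _ => ?_
        have := Nat.div_mul_le_self ((j : ℕ) + 1) σ
        calc _ = (((j : ℕ) + 1) / σ * σ) * m.1 j := by ring
          _ ≤ _ := Nat.mul_le_mul_right _ this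
      rw [aux_lam, hw]
      simp only [lamW]
      have : ((∑ j : Fin k, (((j : ℕ) + 1) / σ) * m.1 j : ℕ) : ℝ) ≤ ((((i : ℕ) + 1) / σ : ℕ) : ℝ) := by
        exact_mod_cast hfl
      nlinarith
    · intro i m
      simp only [zLamPart]
      refine if_congr (and_congr_right fun hw => ?_) rfl rfl
      rw [aux_lam, hw]
      simp only [lamW]
      rw [sub_right_inj, mul_left_inj' hε0.ne', Nat.cast_inj, eq_comm]
  · refine aux_ne k _ ?_ ?_
    · intro i m h
      simp only [zMuPart] at h
      split_ifs at h with h1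
      · exact h1.1
      · exact absurd rfl h
    · intro i
      refine ⟨auxMon k ⟨0, by omega⟩ (i + 1) (by omega) (by omega), ?_⟩
      simp only [zMuPart]
      rw [if_pos]
      · exact aux_mult k _
      · constructor
        · simp [auxMon]
        · intro j hj
          simp only [auxMon]
          rw [if_neg]
          rintro rfl
          simp at hj; omega
  · have hs : σ - 1 < k := by omega
    refine aux_limit k _ (fun i => ((i : ℕ) + 1 : ℝ)) _ ?_ ?_
    · intro i m hw
      rw [aux_mu k σ ε m hs (by omega), hw]
      push_cast
      have : (0 : ℝ) ≤ ε * (m.1 ⟨σ - 1, hs⟩ : ℝ) := by positivity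
      linarith
    · intro i m
      simp only [zMuPart]
      refine if_congr (and_congr_right fun hw => ?_) rfl rfl
      rw [aux_mu k σ ε m hs (by omega), hw]
      push_cast
      rw [left_eq_add, mul_eq_zero, or_iff_right hε0.ne', Nat.cast_eq_zero]
      constructor
      · intro h; exact h _ (by simp only; omega)
      · intro h j hj
        have e : j = ⟨σ - 1, hs⟩ := Fin.ext (by simp only; omega)
        exact e ▸ h

end JetPaper
end

section
/- Fix 0 < ε < 1 small enough and 2 ≤ σ ≤ k. Then the limit G^σ = lim_{t→0} G_{λ^σ(t)z} exists and is a k-dimensional subgroup of GL(k,ℂ) contained in the stabiliser of z_{λ^σ}, and G^σ contains a (k−1)-dimensional subgroup of the standard maximal unipotent subgroup of SL(k,ℂ) (the upper triangular matrices with 1's on the diagonal). -/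
open scoped BigOperators ENNReal

namespace JetPaper

/-- `n_i^σ = max_{1 ≤ j ≤ k−i+1} (λ^σ_{j+i−1} − λ^σ_j)`. -/
noncomputable def nmax (k : ℕ) (ε : ℝ) (σ i : ℕ) : ℝ :=
  Finset.sup' (Finset.Icc 1 (k - i + 1)) ⟨1, Finset.mem_Icc.mpr (by omega)⟩
    (fun j => lamW ε σ (j + i - 1) - lamW ε σ j)

/-- The matrix `G_{λ^σ(t)z}` after the substitution `α_i = t^{n_i^σ} β_i`: its `(i,j)`
entry is `t^{λ^σ_i − λ^σ_j} p_{i,j}(t^{n^σ}β)` (indices of `Fin k` represent `1,…,k`). -/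
noncomputable def Gent (k : ℕ) (ε : ℝ) (σ : ℕ) (t : ℝ) (β : Fin k → ℂ) :
    Matrix (Fin k) (Fin k) ℂ :=
  fun i j => ((t ^ (lamW ε σ ((i : ℕ) + 1) - lamW ε σ ((j : ℕ) + 1)) : ℝ) : ℂ) *
    repMat k (fun l => ((t ^ nmax k ε σ ((l : ℕ) + 1) : ℝ) : ℂ) * β l) i j

/-- The identity matrix as a function `Fin k → Fin k → ℂ`. -/
def idFun (k : ℕ) : Fin k → Fin k → ℂ := fun i j => if i = j then 1 else 0


/-! ### Combinatorics of the exponents -/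

def dd (k σ i : ℕ) : ℕ := if σ ∣ i ∧ k + 1 < i + σ then i / σ else (i - 1) / σ

lemma dd_le_div (k σ i : ℕ) : dd k σ i ≤ i / σ := by
  unfold dd
  split_ifs
  · exact le_rfl
  · exact Nat.div_le_div_right (Nat.sub_le _ _)

lemma dd_one (k σ : ℕ) (hσ : 2 ≤ σ) : dd k σ 1 = 0 := by
  have := dd_le_div k σ 1
  rw [Nat.div_eq_of_lt (by omega)] at this
  omega

lemma nmax_eq (k : ℕ) (ε : ℝ) (hε : 0 < ε) (σ i : ℕ) (hσ : 2 ≤ σ) (hi : 1 ≤ i) (hik : i ≤ k) :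
    nmax k ε σ i = ((i : ℝ) - 1) - (dd k σ i : ℝ) * ε := by
  have key : ∀ j, 1 ≤ j → lamW ε σ (j + i - 1) - lamW ε σ j =
      ((i : ℝ) - 1) - ((((j + i - 1) / σ : ℕ) : ℝ) - ((j / σ : ℕ) : ℝ)) * ε := by
    intro j hj
    unfold lamW
    rw [show ((j + i - 1 : ℕ) : ℝ) = (j : ℝ) + i - 1 by
      rw [Nat.cast_sub (by omega)]; push_cast; ring]
    ring
  unfold nmax
  apply le_antisymm
  · apply Finset.sup'_le
    intro j hj
    rw [Finset.mem_Icc] at hj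
    rw [key j hj.1]
    have h : dd k σ i + j / σ ≤ (j + i - 1) / σ := by
      unfold dd
      split_ifs with h
      · rw [Nat.div_eq_of_lt (show j < σ by omega)]
        exact Nat.div_le_div_right (by omega)
      · refine (Nat.div_add_div_le_add_div).trans (Nat.div_le_div_right (by omega))
    have h' : (dd k σ i : ℝ) + ((j / σ : ℕ) : ℝ) ≤ (((j + i - 1) / σ : ℕ) : ℝ) := by
      exact_mod_cast h
    nlinarith
  · by_cases h : σ ∣ i ∧ i + σ ≤ k + 1
    · refine Finset.le_sup'_of_le _ (b := σ) (Finset.mem_Icc.mpr ⟨by omega, by omega⟩) ?_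
      rw [key σ (by omega)]
      have h1 : dd k σ i = (i - 1) / σ := by
        unfold dd
        rw [if_neg (by omega)]
      have h2 : (σ + i - 1) / σ = (i - 1) / σ + 1 := by
        rw [show σ + i - 1 = (i - 1) + σ by omega, Nat.add_div_right _ (by omega)]
      rw [h1, h2, Nat.div_self (by omega)]
      push_cast
      apply le_of_eq
      ring
    · refine Finset.le_sup'_of_le _ (b := 1) (Finset.mem_Icc.mpr ⟨by omega, by omega⟩) ?_
      rw [key 1 le_rfl]
      have h1 : dd k σ i = i / σ := by
        unfold dd
        split_ifs with h'
        · rfl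
        · have : ¬ σ ∣ i := by
            intro h2
            exact h ⟨h2, by by_contra h3; exact h' ⟨h2, by omega⟩⟩
          obtain ⟨n, rfl⟩ : ∃ n, i = n + 1 := ⟨i - 1, by omega⟩
          rw [Nat.add_sub_cancel, Nat.succ_div_of_not_dvd this]
      rw [h1, Nat.div_eq_of_lt (show 1 < σ by omega), show 1 + i - 1 = i by omega]
      simp

lemma comb_aux (k σ : ℕ) (n : ℕ) (a : Fin n → ℕ)
    (hns : ∀ t, ¬ (σ ∣ a t + 1 ∧ k + 1 < a t + 1 + σ)) :
    σ * ∑ t, dd k σ (a t + 1) ≤ ∑ t, a t := by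
  rw [Finset.mul_sum]
  apply Finset.sum_le_sum
  intro t _
  unfold dd
  rw [if_neg (hns t), Nat.add_sub_cancel]
  exact Nat.mul_div_le _ _

lemma comb1 (k σ : ℕ) (hσ : 2 ≤ σ) (i j : Fin k) (a : Fin (i.val + 1) → Fin k)
    (ha : ∑ t, ((a t).val + 1) = j.val + 1) :
    (i.val + 1) / σ + ∑ t, dd k σ ((a t).val + 1) ≤ (j.val + 1) / σ := by
  by_cases hns : ∀ t, ¬ (σ ∣ (a t).val + 1 ∧ k + 1 < (a t).val + 1 + σ)
  · rw [Nat.le_div_iff_mul_le (by omega), mul_comm, mul_add]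
    have h1 := comb_aux k σ _ (fun t => (a t).val) hns
    have h2 := Nat.mul_div_le (i.val + 1) σ
    rw [Finset.sum_add_distrib] at ha
    simp at ha
    omega
  · push Not at hns
    obtain ⟨t0, hd, ht0⟩ := hns
    have hj := j.2
    rw [← Finset.add_sum_erase _ _ (Finset.mem_univ t0)] at ha ⊢
    have hcard : i.val ≤ ∑ t ∈ Finset.univ.erase t0, ((a t).val + 1) := by
      calc i.val = ∑ t ∈ Finset.univ.erase t0, 1 := by simp
        _ ≤ _ := Finset.sum_le_sum (fun t _ => by omega)
    have hz : ∑ t ∈ Finset.univ.erase t0, dd k σ ((a t).val + 1) = 0 := by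
      apply Finset.sum_eq_zero
      intro t ht
      have h1 : (a t).val + 1 ≤ ∑ t ∈ Finset.univ.erase t0, ((a t).val + 1) :=
        Finset.single_le_sum (f := fun t => (a t).val + 1) (fun _ _ => Nat.zero_le _) ht
      have h2 := dd_le_div k σ ((a t).val + 1)
      rw [Nat.div_eq_of_lt (by omega)] at h2
      omega
    have h3 := dd_le_div k σ ((a t0).val + 1)
    have h4 : ((a t0).val + 1) / σ ≤ (j.val + 1) / σ := Nat.div_le_div_right (by omega)
    rw [hz, Nat.div_eq_of_lt (show i.val + 1 < σ by omega)]
    omega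

lemma ai_le {k : ℕ} {n j : ℕ} (a : Fin n → Fin k)
    (ha : ∑ t, ((a t).val + 1) = j + 1) (t : Fin n) : (a t).val ≤ j := by
  have h1 : (a t).val + 1 ≤ ∑ t, ((a t).val + 1) :=
    Finset.single_le_sum (f := fun t => (a t).val + 1) (fun _ _ => Nat.zero_le _)
      (Finset.mem_univ t)
  omega

lemma n_le {k : ℕ} {n j : ℕ} (a : Fin n → Fin k)
    (ha : ∑ t, ((a t).val + 1) = j + 1) : n + ∑ t, (a t).val = j + 1 := by
  rw [Finset.sum_add_distrib] at ha
  simp at ha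
  omega

lemma comb2 (k σ : ℕ) (hσ : 2 ≤ σ) (i j : Fin k) (a : Fin (i.val + 1) → Fin k)
    (ha : ∑ t, ((a t).val + 1) = j.val + 1) :
    dd k σ (i.val + 1) + ∑ t, dd k σ ((a t).val + 1) ≤ dd k σ (j.val + 1) := by
  by_cases hs : σ ∣ j.val + 1 ∧ j.val + 1 + σ ≤ k + 1
  · have h1 := comb_aux k σ _ (fun t => (a t).val) (by
      intro t
      have := ai_le a ha t
      omega)
    have h2 := n_le a ha
    have h3 := comb_aux k σ 1 (fun t => i.val) (by
      intro t
      omega)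
    simp at h1 h3
    have h4 : dd k σ (j.val + 1) = j.val / σ := by
      unfold dd
      rw [if_neg (by omega), Nat.add_sub_cancel]
    rw [h4, Nat.le_div_iff_mul_le (by omega), mul_comm, mul_add]
    omega
  · have h1 : dd k σ (j.val + 1) = (j.val + 1) / σ := by
      unfold dd
      split_ifs with h'
      · rfl
      · have : ¬ σ ∣ j.val + 1 := by
          intro h2
          exact hs ⟨h2, by by_contra h3; exact h' ⟨h2, by omega⟩⟩
        rw [Nat.add_sub_cancel, Nat.succ_div_of_not_dvd this]
    rw [h1]
    exact (Nat.add_le_add_right (dd_le_div _ _ _) _).trans (comb1 k σ hσ i j a ha)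

/-! ### Polynomials and `repMat` -/

open Polynomial in
noncomputable def fpol {R : Type*} [CommSemiring R] (k : ℕ) (α : Fin k → R) : Polynomial R :=
  ∑ s : Fin k, C (α s) * X ^ (s.val + 1)

lemma fpol_pow_coeff {R : Type*} [CommSemiring R] (k : ℕ) (α : Fin k → R) (n j : ℕ) :
    ((fpol k α) ^ n).coeff j =
      ∑ a : Fin n → Fin k, if (∑ t, ((a t).val + 1)) = j then ∏ t, α (a t) else 0 := by
  have h : (fpol k α) ^ n = ∏ _t : Fin n, fpol k α := by simp
  rw [h]
  unfold fpol
  rw [Finset.prod_univ_sum, Polynomial.finsetSum_coeff]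
  simp only [Fintype.piFinset_univ]
  apply Finset.sum_congr rfl
  intro a _
  rw [Finset.prod_mul_distrib, Finset.prod_pow_eq_pow_sum, ← map_prod,
    Polynomial.coeff_C_mul_X_pow]
  simp only [eq_comm]

lemma repMat_eq (k : ℕ) (α : Fin k → ℂ) (i j : Fin k) :
    repMat k α i j = ((fpol k α) ^ (i.val + 1)).coeff (j.val + 1) := by
  rw [fpol_pow_coeff]
  rfl

lemma fpol_coeff_zero {R : Type*} [CommSemiring R] (k : ℕ) (α : Fin k → R) :
    (fpol k α).coeff 0 = 0 := by
  unfold fpol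
  simp [Polynomial.coeff_X_pow]

lemma fpol_coeff {R : Type*} [CommSemiring R] (k : ℕ) (α : Fin k → R) (j : Fin k) :
    (fpol k α).coeff (j.val + 1) = α j := by
  unfold fpol
  rw [Polynomial.finsetSum_coeff, Finset.sum_eq_single j]
  · simp
  · intro b _ hb
    rw [Polynomial.coeff_C_mul_X_pow, if_neg]
    intro h
    exact hb (Fin.ext (by omega))
  · simp

lemma pow_coeff_of_lt {R : Type*} [CommRing R] (f : Polynomial R) (hf : f.coeff 0 = 0) (n j : ℕ)
    (h : j < n) : (f ^ n).coeff j = 0 := by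
  have : Polynomial.X ∣ f := Polynomial.X_dvd_iff.mpr hf
  exact (Polynomial.X_pow_dvd_iff.mp (pow_dvd_pow_of_dvd this n)) j h

lemma comp_coeff {R : Type*} [CommRing R] (k : ℕ) (F f : Polynomial R) (hF : F.coeff 0 = 0)
    (hf : f.coeff 0 = 0) (j : Fin k) :
    (F.comp f).coeff (j.val + 1) =
      ∑ i : Fin k, F.coeff (i.val + 1) * (f ^ (i.val + 1)).coeff (j.val + 1) := by
  rw [Polynomial.comp, Polynomial.eval₂_eq_sum_range' _ (n := F.natDegree + k + 1) (by omega),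
    Polynomial.finsetSum_coeff]
  simp only [Polynomial.coeff_C_mul]
  rw [Fin.sum_univ_eq_sum_range
    (fun i => F.coeff (i + 1) * (f ^ (i + 1)).coeff (j.val + 1)) k]
  rw [Finset.sum_range_succ', hF, zero_mul, add_zero]
  symm
  apply Finset.sum_subset
  · intro x
    simp only [Finset.mem_range]
    omega
  · intro x _ hx
    simp only [Finset.mem_range] at hx
    rw [pow_coeff_of_lt f hf _ _ (by have := j.2; omega), mul_zero]

lemma trunc_pow {R : Type*} [CommRing R] (k : ℕ) (F G : Polynomial R) (h0 : F.coeff 0 = G.coeff 0)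
    (h : ∀ j : Fin k, F.coeff (j.val + 1) = G.coeff (j.val + 1)) (n : ℕ) (j : Fin k) :
    (F ^ n).coeff (j.val + 1) = (G ^ n).coeff (j.val + 1) := by
  have h1 : Polynomial.X ^ (k + 1) ∣ F - G := by
    rw [Polynomial.X_pow_dvd_iff]
    intro d hd
    rw [Polynomial.coeff_sub, sub_eq_zero]
    rcases d with _ | d
    · exact h0
    · exact h ⟨d, by omega⟩
  have h2 := h1.trans (sub_dvd_pow_sub_pow F G n)
  rw [Polynomial.X_pow_dvd_iff] at h2
  have := h2 (j.val + 1) (by have := j.2; omega)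
  rwa [Polynomial.coeff_sub, sub_eq_zero] at this

lemma repMat_mul (k : ℕ) (α α' : Fin k → ℂ) :
    repMat k α * repMat k α' = repMat k (fun j => ∑ i, α i * repMat k α' i j) := by
  ext i j
  rw [Matrix.mul_apply, repMat_eq]
  simp only [repMat_eq]
  rw [← comp_coeff k _ _ (pow_coeff_of_lt _ (fpol_coeff_zero k α) _ _ (by omega))
    (fpol_coeff_zero k α') j, Polynomial.pow_comp]
  apply trunc_pow
  · rw [fpol_coeff_zero, Polynomial.coeff_zero_eq_eval_zero, Polynomial.eval_comp,
      ← Polynomial.coeff_zero_eq_eval_zero, fpol_coeff_zero, ← Polynomial.coeff_zero_eq_eval_zero,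
      fpol_coeff_zero]
  · intro j
    rw [fpol_coeff, comp_coeff k _ _ (fpol_coeff_zero k α) (fpol_coeff_zero k α') j]
    simp only [fpol_coeff]

/-! ### The deformed family -/

noncomputable def PP (k σ : ℕ) (s : ℂ) (β : Fin k → ℂ) : Matrix (Fin k) (Fin k) ℂ :=
  fun i j => ∑ a : Fin (i.val + 1) → Fin k,
    if (∑ t, ((a t).val + 1)) = j.val + 1 then
      s ^ ((j.val + 1) / σ - (i.val + 1) / σ - ∑ t, dd k σ ((a t).val + 1)) * ∏ t, β (a t)
    else 0

noncomputable def DEL (k σ : ℕ) (s : ℂ) (β γ : Fin k → ℂ) : Fin k → ℂ :=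
  fun j => ∑ i : Fin k, β i * ∑ a : Fin (i.val + 1) → Fin k,
    if (∑ t, ((a t).val + 1)) = j.val + 1 then
      s ^ (dd k σ (j.val + 1) - dd k σ (i.val + 1) - ∑ t, dd k σ ((a t).val + 1)) * ∏ t, γ (a t)
    else 0

noncomputable def tw (k σ : ℕ) (s : ℂ) (β : Fin k → ℂ) : Fin k → ℂ :=
  fun l => (s ^ dd k σ (l.val + 1))⁻¹ * β l

lemma PP_eq (k σ : ℕ) (hσ : 2 ≤ σ) (s : ℂ) (hs : s ≠ 0) (β : Fin k → ℂ) (i j : Fin k) :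
    PP k σ s β i j =
      (s ^ ((i.val + 1) / σ))⁻¹ * repMat k (tw k σ s β) i j * s ^ ((j.val + 1) / σ) := by
  unfold PP repMat tw
  rw [Finset.mul_sum, Finset.sum_mul]
  apply Finset.sum_congr rfl
  intro a _
  split_ifs with ha
  · have h := comb1 k σ hσ i j a ha
    rw [Finset.prod_mul_distrib, Finset.prod_inv_distrib, Finset.prod_pow_eq_pow_sum, Nat.sub_sub]
    rw [pow_sub₀ _ hs h, pow_add]
    field_simp
  · simp

lemma DEL_eq (k σ : ℕ) (hσ : 2 ≤ σ) (s : ℂ) (hs : s ≠ 0) (β γ : Fin k → ℂ) :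
    tw k σ s (DEL k σ s β γ) =
      fun j => ∑ i, tw k σ s β i * repMat k (tw k σ s γ) i j := by
  funext j
  unfold DEL repMat tw
  rw [Finset.mul_sum]
  apply Finset.sum_congr rfl
  intro i _
  rw [Finset.mul_sum, Finset.mul_sum, Finset.mul_sum]
  apply Finset.sum_congr rfl
  intro a _
  split_ifs with ha
  · have h := comb2 k σ hσ i j a ha
    rw [Finset.prod_mul_distrib, Finset.prod_inv_distrib, Finset.prod_pow_eq_pow_sum, Nat.sub_sub]
    rw [pow_sub₀ _ hs h, pow_add]
    field_simp
  · simp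

lemma PP_mul_ne (k σ : ℕ) (hσ : 2 ≤ σ) (s : ℂ) (hs : s ≠ 0) (β γ : Fin k → ℂ) :
    PP k σ s β * PP k σ s γ = PP k σ s (DEL k σ s β γ) := by
  ext i j
  rw [PP_eq k σ hσ s hs, DEL_eq k σ hσ s hs, ← repMat_mul, Matrix.mul_apply, Matrix.mul_apply,
    Finset.mul_sum, Finset.sum_mul]
  apply Finset.sum_congr rfl
  intro l _
  rw [PP_eq k σ hσ s hs, PP_eq k σ hσ s hs]
  field_simp

lemma PP_cont (k σ : ℕ) {X : Type*} [TopologicalSpace X] (f : X → ℂ) (hf : Continuous f)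
    (g : X → Fin k → ℂ) (hg : Continuous g) (i j : Fin k) :
    Continuous (fun x => PP k σ (f x) (g x) i j) := by
  unfold PP
  refine continuous_finsetSum _ fun a _ => ?_
  split_ifs
  · fun_prop
  · fun_prop

lemma DEL_cont (k σ : ℕ) (β γ : Fin k → ℂ) :
    Continuous (fun s => DEL k σ s β γ) := by
  unfold DEL
  refine continuous_pi fun j => continuous_finsetSum _ fun i _ => ?_
  refine continuous_const.mul (continuous_finsetSum _ fun a _ => ?_)
  split_ifs
  · fun_prop
  · fun_prop

/-- An identity between continuous functions valid for `s ≠ 0` is valid at `0`. -/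
lemma ext_zero (f g : ℂ → ℂ) (hf : Continuous f) (hg : Continuous g)
    (h : ∀ s, s ≠ 0 → f s = g s) : f 0 = g 0 := by
  have : f = g := Continuous.ext_on (dense_compl_singleton (0 : ℂ)) hf hg (fun s hs => h s hs)
  rw [this]

lemma PP_mul_zero (k σ : ℕ) (hσ : 2 ≤ σ) (β γ : Fin k → ℂ) :
    PP k σ 0 β * PP k σ 0 γ = PP k σ 0 (DEL k σ 0 β γ) := by
  ext i j
  refine ext_zero (fun s => (PP k σ s β * PP k σ s γ) i j)
    (fun s => PP k σ s (DEL k σ s β γ) i j) ?_ ?_ ?_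
  · simp only [Matrix.mul_apply]
    refine continuous_finsetSum _ fun l _ => ?_
    exact (PP_cont k σ _ continuous_id _ continuous_const i l).mul
      (PP_cont k σ _ continuous_id _ continuous_const l j)
  · exact PP_cont k σ _ continuous_id _ (DEL_cont k σ β γ) i j
  · intro s hs
    simp only [PP_mul_ne k σ hσ s hs]

lemma Gent_eq (k : ℕ) (ε : ℝ) (hε : 0 < ε) (σ : ℕ) (hσ : 2 ≤ σ) (t : ℝ) (ht : 0 < t)
    (β : Fin k → ℂ) (i j : Fin k) :
    Gent k ε σ t β i j = PP k σ ((t ^ ε : ℝ) : ℂ) β i j := by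
  unfold Gent PP repMat
  rw [Finset.mul_sum]
  apply Finset.sum_congr rfl
  intro a _
  split_ifs with ha
  · have h := comb1 k σ hσ i j a ha
    have hn := n_le a ha
    rw [Finset.prod_mul_distrib, ← mul_assoc, ← Complex.ofReal_prod, ← Complex.ofReal_mul,
      ← Complex.ofReal_pow]
    congr 2
    rw [← Real.rpow_sum_of_pos ht, ← Real.rpow_add ht, ← Real.rpow_natCast, ← Real.rpow_mul ht.le]
    congr 1
    have hsum : ∑ x, nmax k ε σ ((a x).val + 1) =
        ((∑ x, (a x).val : ℕ) : ℝ) - ((∑ x, dd k σ ((a x).val + 1) : ℕ) : ℝ) * ε := by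
      push_cast
      rw [Finset.sum_mul, ← Finset.sum_sub_distrib]
      apply Finset.sum_congr rfl
      intro x _
      rw [nmax_eq k ε hε σ _ hσ (by omega) (by have := (a x).2; omega)]
      push_cast
      ring
    rw [hsum, Nat.sub_sub, Nat.cast_sub h]
    have hn' : (i.val : ℝ) + 1 + ((∑ x, (a x).val : ℕ) : ℝ) = (j.val : ℝ) + 1 := by
      exact_mod_cast hn
    unfold lamW
    push_cast at hn' ⊢
    linear_combination hn'
  · simp

lemma Gent_tendsto (k : ℕ) (ε : ℝ) (hε : 0 < ε) (σ : ℕ) (hσ : 2 ≤ σ) (β : Fin k → ℂ) :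
    Filter.Tendsto (fun t : ℝ => (fun i j : Fin k => Gent k ε σ t β i j))
      (nhdsWithin 0 (Set.Ioi 0)) (nhds (fun i j => PP k σ 0 β i j)) := by
  refine tendsto_pi_nhds.mpr fun i => tendsto_pi_nhds.mpr fun j => ?_
  have h1 : Continuous (fun t : ℝ => PP k σ ((t ^ ε : ℝ) : ℂ) β i j) := by
    refine PP_cont k σ _ ?_ _ continuous_const i j
    exact Complex.continuous_ofReal.comp (Real.continuous_rpow_const hε.le)
  have h2 := (h1.tendsto 0).mono_left (nhdsWithin_le_nhds (s := Set.Ioi 0))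
  simp only [Real.zero_rpow hε.ne', Complex.ofReal_zero] at h2
  refine h2.congr' ?_
  filter_upwards [self_mem_nhdsWithin] with t ht
  exact (Gent_eq k ε hε σ hσ t ht β i j).symm

/-! ### The stabiliser property -/

noncomputable def gact {k : ℕ} (g : Matrix (Fin k) (Fin k) ℂ) :
    MvPolynomial (Fin k) ℂ →ₐ[ℂ] MvPolynomial (Fin k) ℂ :=
  MvPolynomial.aeval (fun i => ∑ j : Fin k, g j i • MvPolynomial.X j)

noncomputable def EE (k : ℕ) : Polynomial (MvPolynomial (Fin k) ℂ) :=
  fpol k (fun i => MvPolynomial.X i)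

noncomputable def Phi (k : ℕ) : Polynomial (MvPolynomial (Fin k) ℂ) :=
  ∑ l : Fin k, (EE k) ^ (l.val + 1)

lemma fpol_map {R S : Type*} [CommSemiring R] [CommSemiring S] (k : ℕ) (α : Fin k → R)
    (φ : R →+* S) : (fpol k α).map φ = fpol k (fun i => φ (α i)) := by
  unfold fpol
  simp [Polynomial.map_sum]

lemma gact_Phi (k : ℕ) (α : Fin k → ℂ) (j : Fin k) :
    gact (repMat k α) ((Phi k).coeff (j.val + 1)) =
      ∑ i : Fin k, MvPolynomial.C (repMat k α i j) * (Phi k).coeff (i.val + 1) := by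
  have h1 : gact (repMat k α) ((Phi k).coeff (j.val + 1)) =
      ((Phi k).map (gact (repMat k α)).toRingHom).coeff (j.val + 1) := by
    rw [Polynomial.coeff_map]; rfl
  set fC : Polynomial (MvPolynomial (Fin k) ℂ) := (fpol k α).map MvPolynomial.C with hfC
  have hfC0 : fC.coeff 0 = 0 := by
    rw [hfC, Polynomial.coeff_map, fpol_coeff_zero, map_zero]
  have hfCp : ∀ i : Fin k, (fC ^ (i.val + 1)).coeff (j.val + 1) =
      MvPolynomial.C (repMat k α i j) := by
    intro i
    rw [hfC, ← Polynomial.map_pow, Polynomial.coeff_map, repMat_eq]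
  have hE0 : (EE k).coeff 0 = 0 := fpol_coeff_zero _ _
  have hP0 : (Phi k).coeff 0 = 0 := by
    unfold Phi
    rw [Polynomial.finsetSum_coeff]
    exact Finset.sum_eq_zero fun l _ => pow_coeff_of_lt _ hE0 _ _ (by omega)
  have h2 : ((Phi k).map (gact (repMat k α)).toRingHom).coeff (j.val + 1) =
      ((Phi k).comp fC).coeff (j.val + 1) := by
    unfold Phi
    rw [Polynomial.map_sum, Polynomial.finsetSum_coeff, Polynomial.sum_comp,
      Polynomial.finsetSum_coeff]
    apply Finset.sum_congr rfl
    intro l _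
    rw [Polynomial.map_pow, Polynomial.pow_comp]
    apply trunc_pow
    · rw [Polynomial.coeff_map, hE0, map_zero, Polynomial.coeff_zero_eq_eval_zero,
        Polynomial.eval_comp, ← Polynomial.coeff_zero_eq_eval_zero, hfC0,
        ← Polynomial.coeff_zero_eq_eval_zero, hE0]
    · intro j'
      rw [comp_coeff k _ _ hE0 hfC0]
      unfold EE
      rw [Polynomial.coeff_map]
      simp only [fpol_coeff]
      have : (gact (repMat k α)).toRingHom (MvPolynomial.X j') =
          ∑ i, repMat k α i j' • MvPolynomial.X i := by
        show gact (repMat k α) (MvPolynomial.X j') = _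
        unfold gact
        rw [MvPolynomial.aeval_X]
      rw [this]
      apply Finset.sum_congr rfl
      intro i _
      rw [hfC, ← Polynomial.map_pow, Polynomial.coeff_map, ← repMat_eq,
        MvPolynomial.smul_eq_C_mul, mul_comm]
  rw [h1, h2, comp_coeff k _ _ hP0 hfC0]
  apply Finset.sum_congr rfl
  intro i _
  rw [hfCp, mul_comm]

lemma Phi_coeff (k : ℕ) (j : ℕ) (m : Fin k →₀ ℕ) :
    MvPolynomial.coeff m ((Phi k).coeff (j + 1)) =
      if (0 < ∑ i, m i ∧ ∑ i, m i ≤ k) ∧ ∑ i : Fin k, (i.val + 1) * m i = j + 1 then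
        (Nat.multinomial Finset.univ m : ℂ) else 0 := by
  have h1 : ∀ l : ℕ, MvPolynomial.coeff m (((EE k) ^ l).coeff (j + 1)) =
      if ∑ i, m i = l ∧ ∑ i : Fin k, (i.val + 1) * m i = j + 1 then
        (Nat.multinomial Finset.univ m : ℂ) else 0 := by
    intro l
    unfold EE fpol
    rw [Finset.sum_pow_eq_sum_piAntidiag, Polynomial.finsetSum_coeff, MvPolynomial.coeff_sum]
    have h2 : ∀ κ : Fin k → ℕ, MvPolynomial.coeff m
        (((Nat.multinomial Finset.univ κ : Polynomial (MvPolynomial (Fin k) ℂ)) *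
          ∏ i : Fin k, (Polynomial.C (MvPolynomial.X i) * Polynomial.X ^ (i.val + 1)) ^ κ i).coeff
            (j + 1)) = if κ = m then (if ∑ i : Fin k, (i.val + 1) * m i = j + 1 then
        (Nat.multinomial Finset.univ m : ℂ) else 0) else 0 := by
      intro κ
      have h3 : ∏ i : Fin k, (Polynomial.C (MvPolynomial.X i : MvPolynomial (Fin k) ℂ) *
          Polynomial.X ^ (i.val + 1)) ^ κ i =
          Polynomial.C (MvPolynomial.monomial (Finsupp.equivFunOnFinite.symm κ) 1) *
            Polynomial.X ^ (∑ i : Fin k, (i.val + 1) * κ i) := by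
        simp only [mul_pow, ← pow_mul]
        rw [Finset.prod_mul_distrib, Finset.prod_pow_eq_pow_sum, MvPolynomial.monomial_eq,
          Finsupp.prod_fintype _ _ (by simp)]
        simp
      rw [h3, ← Polynomial.C_eq_natCast, ← mul_assoc, ← Polynomial.C_mul,
        Polynomial.coeff_C_mul_X_pow]
      by_cases hκ : κ = m
      · subst hκ
        rw [if_pos rfl]
        simp only [eq_comm (a := j + 1)]
        split_ifs
        · rw [← map_natCast (MvPolynomial.C (σ := Fin k) (R := ℂ)), MvPolynomial.coeff_C_mul,
            MvPolynomial.coeff_monomial, if_pos (by ext; rfl), mul_one]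
        · simp
      · rw [if_neg hκ]
        split_ifs
        · rw [← map_natCast (MvPolynomial.C (σ := Fin k) (R := ℂ)), MvPolynomial.coeff_C_mul,
            MvPolynomial.coeff_monomial, if_neg, mul_zero]
          intro h
          apply hκ
          rw [← h]
          rfl
        · simp
    rw [Finset.sum_congr rfl (fun κ _ => h2 κ), Finset.sum_ite_eq']
    simp only [Finset.mem_piAntidiag]
    by_cases hl : ∑ i, m i = l
    · simp [hl]
    · simp [hl]
  unfold Phi
  rw [Polynomial.finsetSum_coeff, MvPolynomial.coeff_sum, Finset.sum_congr rfl (fun l _ => h1 _)]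
  by_cases hm : 0 < ∑ i, m i ∧ ∑ i, m i ≤ k
  · rw [Finset.sum_eq_single (⟨∑ i, m i - 1, by omega⟩ : Fin k)]
    · have : ∑ i, m i = (∑ i, m i - 1) + 1 := by omega
      simp only [← this, hm, true_and, and_self]
    · intro b _ hb
      rw [if_neg]
      rintro ⟨h, _⟩
      exact hb (Fin.ext (by simp only; omega))
    · simp
  · rw [if_neg (by tauto)]
    apply Finset.sum_eq_zero
    intro l _
    rw [if_neg]
    rintro ⟨h, _⟩
    exact hm (by have := l.2; omega)

lemma symMat_sum {k : ℕ} (g : Matrix (Fin k) (Fin k) ℂ) (F : MvPolynomial (Fin k) ℂ)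
    (hF : ∀ d : Fin k →₀ ℕ, ¬ (0 < ∑ i, d i ∧ ∑ i, d i ≤ k) → MvPolynomial.coeff d F = 0)
    (m : Mon k k) :
    ∑ m' : Mon k k, symMat g m m' * MvPolynomial.coeff (Finsupp.equivFunOnFinite.symm m'.1) F =
      MvPolynomial.coeff (Finsupp.equivFunOnFinite.symm m.1) (gact g F) := by
  classical
  have h1 : F = ∑ m' : Mon k k, MvPolynomial.monomial (Finsupp.equivFunOnFinite.symm m'.1)
      (MvPolynomial.coeff (Finsupp.equivFunOnFinite.symm m'.1) F) := by
    ext d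
    rw [MvPolynomial.coeff_sum]
    simp only [MvPolynomial.coeff_monomial]
    by_cases hd : 0 < ∑ i, d i ∧ ∑ i, d i ≤ k
    · symm
      refine (Finset.sum_eq_single (⟨d, hd⟩ : Mon k k) ?_ ?_).trans ?_
      · intro b _ hb
        rw [if_neg]
        intro h
        apply hb
        apply Subtype.ext
        exact congrArg (fun f : Fin k →₀ ℕ => (f : Fin k → ℕ)) h
      · intro h
        exact absurd (@Finset.mem_univ (Mon k k) _ (⟨d, hd⟩ : Mon k k)) h
      · rw [if_pos (by ext; rfl)]
        congr 1
        ext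
        rfl
    · rw [hF d hd, Finset.sum_eq_zero]
      intro b _
      rw [if_neg]
      intro h
      apply hd
      rw [← h]
      exact b.2
  conv_rhs => rw [h1]
  rw [map_sum, MvPolynomial.coeff_sum]
  apply Finset.sum_congr rfl
  intro m' _
  unfold gact symMat
  rw [MvPolynomial.aeval_monomial, MvPolynomial.algebraMap_eq, MvPolynomial.coeff_C_mul, mul_comm,
    Finsupp.prod_fintype _ _ (by simp)]
  rfl

noncomputable def z1 (k : ℕ) (j : Fin k) : Mon k k → ℂ := fun m =>
  if (∑ i : Fin k, (i.val + 1) * m.1 i) = j.val + 1 then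
    (Nat.multinomial Finset.univ m.1 : ℂ) else 0

lemma z1_eq (k : ℕ) (j : Fin k) (m : Mon k k) :
    z1 k j m = MvPolynomial.coeff (Finsupp.equivFunOnFinite.symm m.1)
      ((Phi k).coeff (j.val + 1)) := by
  rw [Phi_coeff]
  have := m.2
  unfold z1
  simp only [Finsupp.equivFunOnFinite_symm_apply_apply, this, true_and, and_self]
  rfl

lemma repMat_z1 (k : ℕ) (α : Fin k → ℂ) (j : Fin k) (m : Mon k k) :
    ∑ m' : Mon k k, symMat (repMat k α) m m' * z1 k j m' =
      ∑ i, repMat k α i j * z1 k i m := by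
  simp only [z1_eq]
  rw [symMat_sum, gact_Phi, MvPolynomial.coeff_sum]
  · simp only [MvPolynomial.coeff_C_mul]
  · intro d hd
    rw [Phi_coeff, if_neg (by tauto)]

lemma coeff_scale {k : ℕ} (u : Fin k → ℂ) (F : MvPolynomial (Fin k) ℂ) (m : Fin k →₀ ℕ) :
    MvPolynomial.coeff m (MvPolynomial.aeval (fun j => u j • MvPolynomial.X (R := ℂ) j) F) =
      (∏ j, u j ^ m j) * MvPolynomial.coeff m F := by
  classical
  induction F using MvPolynomial.induction_on' with
  | monomial d c =>
    rw [MvPolynomial.aeval_monomial, MvPolynomial.algebraMap_eq, MvPolynomial.coeff_C_mul,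
      Finsupp.prod_fintype _ _ (by simp), MvPolynomial.coeff_monomial]
    have : ∏ i, (u i • MvPolynomial.X (R := ℂ) i) ^ d i =
        MvPolynomial.monomial d (∏ i, u i ^ d i) := by
      simp only [MvPolynomial.smul_eq_C_mul, mul_pow]
      rw [Finset.prod_mul_distrib, MvPolynomial.monomial_eq, Finsupp.prod_fintype _ _ (by simp),
        map_prod]
      simp
    rw [this, MvPolynomial.coeff_monomial]
    split_ifs with h
    · subst h; ring
    · simp
  | add p q hp hq =>
    rw [map_add, MvPolynomial.coeff_add, MvPolynomial.coeff_add, hp, hq, mul_add]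

lemma symMat_conj {k : ℕ} (p : Matrix (Fin k) (Fin k) ℂ) (u v : Fin k → ℂ) (m m' : Mon k k) :
    symMat (fun i j => u i * p i j * v j) m m' =
      (∏ j, u j ^ m.1 j) * symMat p m m' * ∏ j, v j ^ m'.1 j := by
  unfold symMat
  have h1 : ∏ i : Fin k, (∑ j : Fin k, (u j * p j i * v i) • MvPolynomial.X (R := ℂ) j) ^ m'.1 i =
      MvPolynomial.C (∏ j, v j ^ m'.1 j) *
        MvPolynomial.aeval (fun j => u j • MvPolynomial.X (R := ℂ) j)
        (∏ i : Fin k, (∑ j : Fin k, p j i • MvPolynomial.X (R := ℂ) j) ^ m'.1 i) := by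
    rw [map_prod, map_prod, ← Finset.prod_mul_distrib]
    apply Finset.prod_congr rfl
    intro i _
    rw [map_pow, map_pow, ← mul_pow]
    congr 1
    rw [map_sum, Finset.mul_sum]
    apply Finset.sum_congr rfl
    intro j _
    simp only [MvPolynomial.smul_eq_C_mul, map_mul, MvPolynomial.aeval_X, MvPolynomial.aeval_C,
      MvPolynomial.algebraMap_eq]
    ring
  rw [h1, MvPolynomial.coeff_C_mul, coeff_scale]
  simp only [Finsupp.equivFunOnFinite_symm_apply_apply]
  ring

noncomputable def zP (k σ : ℕ) (s : ℂ) (j : Fin k) : Mon k k → ℂ := fun m =>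
  if (∑ i : Fin k, (i.val + 1) * m.1 i) = j.val + 1 then
    s ^ ((j.val + 1) / σ - ∑ i : Fin k, ((i.val + 1) / σ) * m.1 i) *
      (Nat.multinomial Finset.univ m.1 : ℂ) else 0

lemma wt_le (k σ : ℕ) (hσ : 2 ≤ σ) (j : Fin k) (m : Mon k k)
    (h : (∑ i : Fin k, (i.val + 1) * m.1 i) = j.val + 1) :
    ∑ i : Fin k, ((i.val + 1) / σ) * m.1 i ≤ (j.val + 1) / σ := by
  rw [Nat.le_div_iff_mul_le (by omega), ← h, Finset.sum_mul]
  apply Finset.sum_le_sum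
  intro i _
  calc (i.val + 1) / σ * m.1 i * σ = ((i.val + 1) / σ * σ) * m.1 i := by ring
    _ ≤ _ := Nat.mul_le_mul_right _ (Nat.div_mul_le_self _ _)

lemma zP_eq (k σ : ℕ) (hσ : 2 ≤ σ) (s : ℂ) (hs : s ≠ 0) (j : Fin k) (m : Mon k k) :
    zP k σ s j m = s ^ ((j.val + 1) / σ) *
      (∏ i : Fin k, (s ^ ((i.val + 1) / σ)) ^ m.1 i)⁻¹ * z1 k j m := by
  unfold zP z1
  split_ifs with h
  · rw [pow_sub₀ _ hs (wt_le k σ hσ j m h)]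
    simp only [← pow_mul, Finset.prod_pow_eq_pow_sum]
  · simp

lemma PP_zP_ne (k σ : ℕ) (hσ : 2 ≤ σ) (s : ℂ) (hs : s ≠ 0) (β : Fin k → ℂ) (j : Fin k)
    (m : Mon k k) :
    ∑ m' : Mon k k, symMat (PP k σ s β) m m' * zP k σ s j m' =
      ∑ i, PP k σ s β i j * zP k σ s i m := by
  have h1 : PP k σ s β = fun i j => (s ^ ((i.val + 1) / σ))⁻¹ * repMat k (tw k σ s β) i j *
      s ^ ((j.val + 1) / σ) := by
    funext i j
    exact PP_eq k σ hσ s hs β i j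
  have h2 := repMat_z1 k (tw k σ s β) j m
  have hne : ∀ m' : Mon k k, ∏ i : Fin k, (s ^ ((i.val + 1) / σ)) ^ m'.1 i ≠ 0 := by
    intro m'
    exact Finset.prod_ne_zero_iff.mpr fun i _ => pow_ne_zero _ (pow_ne_zero _ hs)
  have h3 : ∀ m', symMat (PP k σ s β) m m' * zP k σ s j m' =
      (s ^ ((j.val + 1) / σ) * (∏ i : Fin k, (s ^ ((i.val + 1) / σ)) ^ m.1 i)⁻¹) *
        (symMat (repMat k (tw k σ s β)) m m' * z1 k j m') := by
    intro m'
    rw [h1, symMat_conj, zP_eq k σ hσ s hs]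
    simp only [inv_pow, Finset.prod_inv_distrib]
    have := hne m'
    field_simp
  rw [Finset.sum_congr rfl (fun m' _ => h3 m'), ← Finset.mul_sum, h2, Finset.mul_sum]
  apply Finset.sum_congr rfl
  intro i _
  rw [PP_eq k σ hσ s hs, zP_eq k σ hσ s hs]
  field_simp

lemma symMat_cont {k : ℕ} (g : ℂ → Matrix (Fin k) (Fin k) ℂ)
    (hg : ∀ i j, Continuous (fun s => g s i j)) (m m' : Mon k k) :
    Continuous (fun s => symMat (g s) m m') := by
  have hmul : ∀ f h : ℂ → MvPolynomial (Fin k) ℂ,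
      (∀ d, Continuous fun s => MvPolynomial.coeff d (f s)) →
      (∀ d, Continuous fun s => MvPolynomial.coeff d (h s)) →
      (∀ d, Continuous fun s => MvPolynomial.coeff d (f s * h s)) := by
    intro f h hf hh d
    simp only [MvPolynomial.coeff_mul]
    exact continuous_finsetSum _ fun x _ => (hf _).mul (hh _)
  have hone : ∀ d : Fin k →₀ ℕ, Continuous fun _ : ℂ =>
      MvPolynomial.coeff d (1 : MvPolynomial (Fin k) ℂ) := fun d => continuous_const
  have hpow : ∀ f : ℂ → MvPolynomial (Fin k) ℂ,
      (∀ d, Continuous fun s => MvPolynomial.coeff d (f s)) → ∀ n : ℕ,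
      (∀ d, Continuous fun s => MvPolynomial.coeff d (f s ^ n)) := by
    intro f hf n
    induction n with
    | zero => simpa using hone
    | succ n ih =>
      simp only [pow_succ]
      exact hmul _ _ ih hf
  have hprod : ∀ (F : Fin k → ℂ → MvPolynomial (Fin k) ℂ),
      (∀ i d, Continuous fun s => MvPolynomial.coeff d (F i s)) → ∀ T : Finset (Fin k),
      (∀ d, Continuous fun s => MvPolynomial.coeff d (∏ i ∈ T, F i s)) := by
    classical
    intro F hF T
    induction T using Finset.induction_on with
    | empty => simpa using hone
    | insert a T ha ih =>
      simp only [Finset.prod_insert ha]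
      exact hmul _ _ (hF a) ih
  unfold symMat
  refine hprod (fun i s => (∑ j : Fin k, g s j i • MvPolynomial.X j) ^ m'.1 i) ?_ _ _
  intro i
  apply hpow
  intro d
  simp only [MvPolynomial.coeff_sum, MvPolynomial.coeff_smul, smul_eq_mul]
  exact continuous_finsetSum _ fun j _ => (hg j i).mul continuous_const

lemma zP_zero (k σ : ℕ) (hσ : 2 ≤ σ) (j : Fin k) : zP k σ 0 j = zLamPart k σ (j.val + 1) := by
  funext m
  unfold zP zLamPart
  by_cases h : (∑ i : Fin k, (i.val + 1) * m.1 i) = j.val + 1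
  · have h1 := wt_le k σ hσ j m h
    by_cases h2 : ∑ i : Fin k, ((i.val + 1) / σ) * m.1 i = (j.val + 1) / σ
    · rw [if_pos h, if_pos ⟨h, h2⟩, h2]
      simp
    · rw [if_pos h, if_neg (by tauto), zero_pow (by omega), zero_mul]
  · rw [if_neg h, if_neg (by tauto)]

lemma PP_zLam (k σ : ℕ) (hσ : 2 ≤ σ) (β : Fin k → ℂ) (j : Fin k) (m : Mon k k) :
    ∑ m' : Mon k k, symMat (PP k σ 0 β) m m' * zLamPart k σ (j.val + 1) m' =
      ∑ i : Fin k, PP k σ 0 β i j * zLamPart k σ (i.val + 1) m := by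
  simp only [← zP_zero k σ hσ]
  have hz : ∀ (j : Fin k) (m : Mon k k), Continuous (fun s => zP k σ s j m) := by
    intro j m
    unfold zP
    split_ifs <;> fun_prop
  have hP : ∀ i j, Continuous (fun s => PP k σ s β i j) := fun i j =>
    PP_cont k σ _ continuous_id _ continuous_const i j
  refine ext_zero (fun s => ∑ m' : Mon k k, symMat (PP k σ s β) m m' * zP k σ s j m')
    (fun s => ∑ i : Fin k, PP k σ s β i j * zP k σ s i m) ?_ ?_ ?_
  · exact continuous_finsetSum _ fun m' _ => (symMat_cont _ hP m m').mul (hz j m')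
  · exact continuous_finsetSum _ fun i _ => (hP i j).mul (hz i m)
  · intro s hs
    exact PP_zP_ne k σ hσ s hs β j m

lemma wedge_eq_det {n k : ℕ} (v : Fin k → (Mon n k → ℂ)) (mf : Fin k → Mon n k) :
    wedge v mf = Matrix.det (Matrix.of fun a b => v a (mf b)) := by
  rw [Matrix.det_apply']
  rfl

lemma actV_wedge {k : ℕ} (g : Matrix (Fin k) (Fin k) ℂ) (v : Fin k → (Mon k k → ℂ)) :
    actV g (wedge v) = wedge (fun j m => ∑ m' : Mon k k, symMat g m m' * v j m') := by
  classical
  funext mf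
  unfold actV wedge
  simp only [Finset.mul_sum]
  rw [Finset.sum_comm]
  apply Finset.sum_congr rfl
  intro τ _
  rw [Finset.prod_univ_sum, Finset.mul_sum]
  simp only [Fintype.piFinset_univ]
  apply Finset.sum_congr rfl
  intro mf' _
  rw [Finset.prod_mul_distrib]
  ring

lemma PP_stab (k σ : ℕ) (hσ : 2 ≤ σ) (β : Fin k → ℂ) :
    actV (PP k σ 0 β) (zLamVec k σ) = (PP k σ 0 β).det • zLamVec k σ := by
  unfold zLamVec
  rw [actV_wedge]
  simp only [PP_zLam k σ hσ]
  funext mf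
  rw [Pi.smul_apply, wedge_eq_det, wedge_eq_det, smul_eq_mul, ← Matrix.det_transpose (PP k σ 0 β),
    ← Matrix.det_mul]
  congr 1

/-! ### Triangular systems, inverses -/

lemma tri {k : ℕ} (φ : Fin k → (Fin k → ℂ) → Prop)
    (hdep : ∀ j β β', (∀ i ≤ j, β i = β' i) → φ j β → φ j β')
    (hex : ∀ j β, (∀ i < j, φ i β) → ∃ x, φ j (Function.update β j x)) :
    ∃ β, ∀ j, φ j β := by
  have h : ∀ n : ℕ, n ≤ k → ∃ β, ∀ j : Fin k, j.val < n → φ j β := by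
    intro n
    induction n with
    | zero => exact fun _ => ⟨0, fun j hj => by omega⟩
    | succ n ih =>
      intro hn
      obtain ⟨β, hβ⟩ := ih (by omega)
      obtain ⟨x, hx⟩ := hex ⟨n, hn⟩ β (fun i hi => hβ i hi)
      refine ⟨Function.update β ⟨n, hn⟩ x, fun j hj => ?_⟩
      by_cases hjn : j.val = n
      · have : j = ⟨n, hn⟩ := Fin.ext hjn
        rw [this]
        exact hx
      · refine hdep j β _ (fun i hi => ?_) (hβ j (by omega))
        rw [Function.update_of_ne]
        intro h
        have h1 : i.val ≤ j.val := hi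
        rw [h] at h1
        simp only at h1
        omega
  obtain ⟨β, hβ⟩ := h k le_rfl
  exact ⟨β, fun j => hβ j j.2⟩

lemma row0 {k : ℕ} (i j : Fin k) (hi : i.val = 0) (w : (Fin (i.val + 1) → Fin k) → ℂ)
    (γ : Fin k → ℂ) :
    (∑ a : Fin (i.val + 1) → Fin k, if (∑ t, ((a t).val + 1)) = j.val + 1 then
      w a * ∏ t, γ (a t) else 0) = w (fun _ => j) * γ j := by
  obtain ⟨i, hik⟩ := i
  simp only at hi
  subst hi
  rw [Finset.sum_eq_single (fun _ => j)]
  · simp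
  · intro a _ ha
    rw [if_neg]
    intro h
    apply ha
    funext t
    simp at h
    have ht : t = 0 := Subsingleton.elim (α := Fin 1) _ _
    rw [ht]
    exact Fin.ext h
  · simp

noncomputable def RR (k σ : ℕ) (β γ : Fin k → ℂ) (j : Fin k) : ℂ :=
  ∑ i : Fin k, if i.val = 0 then 0 else β i * ∑ a : Fin (i.val + 1) → Fin k,
    if (∑ t, ((a t).val + 1)) = j.val + 1 then
      (0 : ℂ) ^ (dd k σ (j.val + 1) - dd k σ (i.val + 1) - ∑ t, dd k σ ((a t).val + 1)) *
        ∏ t, γ (a t)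
    else 0

lemma DEL_split (k σ : ℕ) (z0 : Fin k) (hz0 : z0.val = 0) (β γ : Fin k → ℂ)
    (j : Fin k) : DEL k σ 0 β γ j = β z0 * γ j + RR k σ β γ j := by
  have h1 : β z0 * γ j = ∑ i : Fin k, if i = z0 then β z0 * γ j else 0 := by simp
  rw [h1]
  unfold DEL RR
  rw [← Finset.sum_add_distrib]
  apply Finset.sum_congr rfl
  intro i _
  by_cases hi : i.val = 0
  · have hi' : i = z0 := Fin.ext (by omega)
    rw [if_pos hi', if_pos hi, row0 i j hi, add_zero]
    have : ∑ _t : Fin (i.val + 1), dd k σ (j.val + 1) = dd k σ (j.val + 1) := by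
      rw [Finset.sum_const, Finset.card_univ, Fintype.card_fin, hi]; simp
    simp only [this]
    rw [Nat.sub_eq_zero_of_le (Nat.sub_le _ _), pow_zero, one_mul, hi']
  · have hi' : i ≠ z0 := fun h => hi (by rw [h, hz0])
    rw [if_neg hi, if_neg hi', zero_add]

lemma RR_congr (k σ : ℕ) (β γ γ' : Fin k → ℂ) (j : Fin k)
    (h : ∀ i < j, γ i = γ' i) : RR k σ β γ j = RR k σ β γ' j := by
  unfold RR
  apply Finset.sum_congr rfl
  intro i _
  split_ifs with hi
  · rfl
  · congr 1
    apply Finset.sum_congr rfl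
    intro a _
    split_ifs with ha
    · congr 1
      apply Finset.prod_congr rfl
      intro t _
      apply h
      have h1 := n_le a ha
      have h2 : (a t).val ≤ ∑ t, (a t).val :=
        Finset.single_le_sum (f := fun t => (a t).val) (fun _ _ => Nat.zero_le _)
          (Finset.mem_univ t)
      exact Fin.lt_def.mpr (by omega)
    · rfl

noncomputable def ee (k : ℕ) : Fin k → ℂ := fun l => if l.val = 0 then 1 else 0

lemma DEL_inv (k σ : ℕ) (z0 : Fin k) (hz0 : z0.val = 0) (β : Fin k → ℂ) (hβ : β z0 ≠ 0) :
    ∃ γ, DEL k σ 0 β γ = ee k := by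
  obtain ⟨γ, hγ⟩ := tri (fun j γ => DEL k σ 0 β γ j = ee k j) (by
      intro j γ γ' h h1
      simp only [DEL_split k σ z0 hz0] at h1 ⊢
      rw [← h j le_rfl, ← RR_congr k σ β γ γ' j (fun i hi => h i hi.le)]
      exact h1) (by
      intro j γ _
      refine ⟨(ee k j - RR k σ β γ j) / β z0, ?_⟩
      rw [DEL_split k σ z0 hz0, Function.update_self, RR_congr k σ β
        (Function.update γ j ((ee k j - RR k σ β γ j) / β z0)) γ j (fun i hi => by
          rw [Function.update_of_ne hi.ne])]
      field_simp
      ring)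
  exact ⟨γ, funext hγ⟩

lemma DEL_zero (k σ : ℕ) (z0 : Fin k) (hz0 : z0.val = 0) (β γ : Fin k → ℂ) :
    DEL k σ 0 β γ z0 = β z0 * γ z0 := by
  rw [DEL_split k σ z0 hz0, add_eq_left]
  unfold RR
  apply Finset.sum_eq_zero
  intro i _
  split_ifs with hi
  · rfl
  · rw [Finset.sum_eq_zero, mul_zero]
    intro a _
    rw [if_neg]
    intro ha
    have := n_le a ha
    omega

lemma PP_lower (k σ : ℕ) (s : ℂ) (β : Fin k → ℂ) (i j : Fin k) (hij : j < i) :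
    PP k σ s β i j = 0 := by
  unfold PP
  apply Finset.sum_eq_zero
  intro a _
  rw [if_neg]
  intro ha
  have := n_le a ha
  have : j.val < i.val := hij
  omega

lemma PP_diag (k σ : ℕ) (hσ : 2 ≤ σ) (s : ℂ) (z0 : Fin k) (hz0 : z0.val = 0) (β : Fin k → ℂ)
    (i : Fin k) : PP k σ s β i i = β z0 ^ (i.val + 1) := by
  unfold PP
  rw [Finset.sum_eq_single (fun _ => z0)]
  · simp [hz0, dd_one k σ hσ]
  · intro a _ ha
    rw [if_neg]
    intro h
    apply ha
    have h1 := n_le a h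
    have h2 : ∑ t, (a t).val = 0 := by omega
    rw [Finset.sum_eq_zero_iff] at h2
    funext t
    exact Fin.ext (by rw [h2 t (Finset.mem_univ t), hz0])
  · simp

lemma PP_id (k σ : ℕ) (hσ : 2 ≤ σ) (s : ℂ) (z0 : Fin k) (hz0 : z0.val = 0) :
    PP k σ s (ee k) = 1 := by
  ext i j
  by_cases hij : i = j
  · subst hij
    rw [PP_diag k σ hσ s z0 hz0, Matrix.one_apply_eq]
    simp [ee, hz0]
  · rw [Matrix.one_apply_ne hij]
    unfold PP
    apply Finset.sum_eq_zero
    intro a _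
    split_ifs with ha
    · by_cases hz : ∀ t, (a t).val = 0
      · exfalso
        have h1 := n_le a ha
        rw [Finset.sum_eq_zero (fun t _ => hz t)] at h1
        exact hij (Fin.ext (by omega))
      · push Not at hz
        obtain ⟨t, ht⟩ := hz
        rw [Finset.prod_eq_zero (Finset.mem_univ t), mul_zero]
        simp [ee, ht]
    · rfl

/-! ### Coordinates on the limit group -/

def spec (k σ : ℕ) (j : Fin k) : Prop := σ ∣ j.val + 1 ∧ j.val + 1 + σ ≤ k + 1

open Classical in
noncomputable def ri (k σ : ℕ) (z0 : Fin k) (j : Fin k) : Fin k :=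
  if h : spec k σ j then ⟨σ - 1, by have := h.2; have := j.2; omega⟩ else z0

open Classical in
noncomputable def ci (k σ : ℕ) (j : Fin k) : Fin k :=
  if h : spec k σ j ∧ 2 ≤ σ then ⟨j.val + σ - 1, by have := h.1.2; omega⟩ else j

lemma ric (k σ : ℕ) (hσ : 2 ≤ σ) (z0 : Fin k) (hz0 : z0.val = 0) (j : Fin k) :
    (ri k σ z0 j).val + j.val = (ci k σ j).val := by
  unfold ri ci
  by_cases h : spec k σ j
  · rw [dif_pos h, dif_pos ⟨h, hσ⟩]
    simp only
    omega
  · rw [dif_neg h, dif_neg (by tauto), hz0, zero_add]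

lemma PP_ri_congr (k σ : ℕ) (hσ : 2 ≤ σ) (z0 : Fin k) (hz0 : z0.val = 0) (j : Fin k)
    (β β' : Fin k → ℂ) (h : ∀ i ≤ j, β i = β' i) :
    PP k σ 0 β (ri k σ z0 j) (ci k σ j) = PP k σ 0 β' (ri k σ z0 j) (ci k σ j) := by
  unfold PP
  apply Finset.sum_congr rfl
  intro a _
  split_ifs with ha
  · congr 1
    apply Finset.prod_congr rfl
    intro t _
    apply h
    have h1 := n_le a ha
    have h2 : (a t).val ≤ ∑ t, (a t).val :=
      Finset.single_le_sum (f := fun t => (a t).val) (fun _ _ => Nat.zero_le _)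
        (Finset.mem_univ t)
    have h3 := ric k σ hσ z0 hz0 j
    exact Fin.le_def.mpr (by omega)
  · rfl

lemma PP_ri_not_spec (k σ : ℕ) (hσ : 2 ≤ σ) (z0 : Fin k) (hz0 : z0.val = 0) (j : Fin k)
    (β : Fin k → ℂ) (hj : ¬ spec k σ j) :
    PP k σ 0 β (ri k σ z0 j) (ci k σ j) = β j := by
  have h1 : ri k σ z0 j = z0 := by unfold ri; rw [dif_neg hj]
  have h2 : ci k σ j = j := by unfold ci; rw [dif_neg (by tauto)]
  rw [h1, h2]
  unfold PP
  rw [row0 z0 j hz0]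
  have h3 : ∑ _t : Fin (z0.val + 1), dd k σ (j.val + 1) = dd k σ (j.val + 1) := by
    rw [Finset.sum_const, Finset.card_univ, Fintype.card_fin, hz0]; simp
  have h4 : dd k σ (j.val + 1) = (j.val + 1) / σ := by
    unfold dd
    split_ifs with h'
    · rfl
    · have : ¬ σ ∣ j.val + 1 := by
        intro h2
        exact hj ⟨h2, by by_contra h3; exact h' ⟨h2, by omega⟩⟩
      rw [Nat.add_sub_cancel, Nat.succ_div_of_not_dvd this]
  rw [h3, h4, Nat.sub_eq_zero_of_le (Nat.sub_le _ _)]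
  simp

lemma PP_ri_spec (k σ : ℕ) (hσ : 2 ≤ σ) (z0 : Fin k) (hz0 : z0.val = 0) (j : Fin k)
    (β : Fin k → ℂ) (hj : spec k σ j) :
    ∃ (Q : ℂ) (N : ℕ), N ≠ 0 ∧ ∀ x,
      PP k σ 0 (Function.update β j x) (ri k σ z0 j) (ci k σ j) =
        Q + (N * β z0 ^ (ri k σ z0 j).val) * x := by
  classical
  have hj0 : j.val ≠ 0 := by
    intro h
    have := Nat.le_of_dvd (by omega) hj.1
    omega
  have hzj : z0 ≠ j := fun h => hj0 (by rw [← h, hz0])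
  have h3 := ric k σ hσ z0 hz0 j
  have hr : (ri k σ z0 j).val = σ - 1 := by unfold ri; rw [dif_pos hj]
  have hddj : dd k σ (j.val + 1) = j.val / σ := by
    unfold dd
    rw [if_neg (by have := hj.2; omega), Nat.add_sub_cancel]
  set i := ri k σ z0 j with hi
  set c := ci k σ j with hc
  let B : Finset (Fin (i.val + 1) → Fin k) := Finset.univ.filter
    (fun a => (∑ t, ((a t).val + 1)) = c.val + 1 ∧ ∃ t, a t = j)
  refine ⟨∑ a : Fin (i.val + 1) → Fin k,
    (if (∑ t, ((a t).val + 1)) = c.val + 1 ∧ ¬ ∃ t, a t = j then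
      (0 : ℂ) ^ ((c.val + 1) / σ - (i.val + 1) / σ - ∑ t, dd k σ ((a t).val + 1)) *
        ∏ t, β (a t) else 0), B.card, ?_, ?_⟩
  · apply Finset.card_ne_zero_of_mem (a := fun t => if t = 0 then j else z0)
    rw [Finset.mem_filter]
    refine ⟨Finset.mem_univ _, ?_, 0, by simp⟩
    rw [Finset.sum_add_distrib, Fin.sum_univ_succ]
    simp [hz0]
    omega
  · intro x
    have hB : (B.card : ℂ) * β z0 ^ i.val * x = ∑ a : Fin (i.val + 1) → Fin k,
        if (∑ t, ((a t).val + 1)) = c.val + 1 ∧ ∃ t, a t = j then β z0 ^ i.val * x else 0 := by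
      rw [← Finset.sum_filter, Finset.sum_const, nsmul_eq_mul, mul_assoc]
    rw [hB, ← Finset.sum_add_distrib]
    unfold PP
    apply Finset.sum_congr rfl
    intro a _
    by_cases ha : (∑ t, ((a t).val + 1)) = c.val + 1
    · by_cases hex : ∃ t, a t = j
      · rw [if_pos ha, if_neg (by tauto), if_pos ⟨ha, hex⟩, zero_add]
        obtain ⟨t0, ht0⟩ := hex
        have h1 := n_le a ha
        rw [← Finset.add_sum_erase _ _ (Finset.mem_univ t0), ht0] at h1
        have h2 : ∑ t ∈ Finset.univ.erase t0, (a t).val = 0 := by omega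
        rw [Finset.sum_eq_zero_iff] at h2
        have h4 : ∀ t ∈ Finset.univ.erase t0, a t = z0 := fun t ht =>
          Fin.ext (by rw [h2 t ht, hz0])
        rw [← Finset.add_sum_erase _ _ (Finset.mem_univ t0),
          ← Finset.mul_prod_erase _ _ (Finset.mem_univ t0), ht0, Function.update_self]
        rw [Finset.sum_eq_zero (fun t ht => by rw [h4 t ht, hz0, zero_add, dd_one k σ hσ]),
          Finset.prod_congr rfl (fun t ht => by
            rw [h4 t ht, Function.update_of_ne hzj]), Finset.prod_const, hddj]
        have h5 : (c.val + 1) / σ = j.val / σ + 1 := by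
          rw [show c.val + 1 = j.val + σ by omega, Nat.add_div_right _ (by omega)]
        have h6 : (i.val + 1) / σ = 1 := by
          rw [show i.val + 1 = σ by omega, Nat.div_self (by omega)]
        rw [h5, h6, Nat.sub_eq_zero_of_le (by omega), pow_zero]
        simp
        ring
      · rw [if_pos ha, if_pos ⟨ha, hex⟩, if_neg (by tauto), add_zero]
        congr 1
        apply Finset.prod_congr rfl
        intro t _
        rw [Function.update_of_ne]
        intro h
        exact hex ⟨t, h⟩
    · rw [if_neg ha, if_neg (by tauto), if_neg (by tauto), add_zero]

lemma not_spec_zero (k σ : ℕ) (hσ : 2 ≤ σ) (z0 : Fin k) (hz0 : z0.val = 0) : ¬ spec k σ z0 := by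
  intro h
  have := Nat.le_of_dvd (by omega) h.1
  omega

lemma surj (k σ : ℕ) (hσ : 2 ≤ σ) (z0 : Fin k) (hz0 : z0.val = 0) (y : Fin k → ℂ)
    (hy : y z0 ≠ 0) :
    ∃ β : Fin k → ℂ, β z0 = y z0 ∧ ∀ j, PP k σ 0 β (ri k σ z0 j) (ci k σ j) = y j := by
  obtain ⟨β, hβ⟩ := tri (fun j β => PP k σ 0 β (ri k σ z0 j) (ci k σ j) = y j) (by
      intro j β β' h h1
      rw [← PP_ri_congr k σ hσ z0 hz0 j β β' h]
      exact h1) (by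
      intro j β h
      by_cases hj : spec k σ j
      · obtain ⟨Q, N, hN, hQ⟩ := PP_ri_spec k σ hσ z0 hz0 j β hj
        have hzj : z0 < j := by
          rw [Fin.lt_def, hz0]
          by_contra h0
          apply not_spec_zero k σ hσ j (by omega) hj
        have h1 := h z0 hzj
        rw [PP_ri_not_spec k σ hσ z0 hz0 z0 β (not_spec_zero k σ hσ z0 hz0)] at h1
        have hne : (N : ℂ) * β z0 ^ (ri k σ z0 j).val ≠ 0 := by
          rw [h1]
          exact mul_ne_zero (by exact_mod_cast hN) (pow_ne_zero _ hy)
        refine ⟨(y j - Q) / ((N : ℂ) * β z0 ^ (ri k σ z0 j).val), ?_⟩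
        rw [hQ, mul_div_cancel₀ _ hne]
        ring
      · refine ⟨y j, ?_⟩
        rw [PP_ri_not_spec k σ hσ z0 hz0 j _ hj, Function.update_self])
  refine ⟨β, ?_, hβ⟩
  rw [← hβ z0, PP_ri_not_spec k σ hσ z0 hz0 z0 β (not_spec_zero k σ hσ z0 hz0)]

lemma PP_contDiff (k σ : ℕ) {E : Type*} [NormedAddCommGroup E] [NormedSpace ℝ E]
    (g : E → Fin k → ℂ) (hg : ∀ l, ContDiff ℝ 1 (fun x => g x l)) :
    ContDiff ℝ 1 (fun (x : E) (i j : Fin k) => PP k σ 0 (g x) i j) := by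
  refine contDiff_pi.mpr fun i => contDiff_pi.mpr fun j => ?_
  unfold PP
  refine ContDiff.sum fun a _ => ?_
  split_ifs
  · refine contDiff_const.mul ?_
    exact contDiff_prod fun t _ => hg (a t)
  · exact contDiff_const

lemma finrank_pi_complex (ι : Type*) [Fintype ι] :
    Module.finrank ℝ (ι → ℂ) = 2 * Fintype.card ι := by
  rw [Module.finrank_pi_fintype]
  simp [Complex.finrank_real_complex, mul_comm]

lemma pr_lip (k : ℕ) (ι : Type*) [Fintype ι] (r c : ι → Fin k) :
    LipschitzWith 1 (fun (M : Fin k → Fin k → ℂ) (j : ι) => M (r j) (c j)) := by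
  refine LipschitzWith.of_dist_le_mul fun M M' => ?_
  rw [NNReal.coe_one, one_mul, dist_pi_le_iff dist_nonneg]
  intro j
  exact (dist_le_pi_dist (M (r j)) (M' (r j)) (c j)).trans (dist_le_pi_dist M M' (r j))

lemma dim_S (k σ : ℕ) (hσ : 2 ≤ σ) (z0 : Fin k) (hz0 : z0.val = 0) :
    dimH {g : Fin k → Fin k → ℂ | ∃ β : Fin k → ℂ, β z0 ≠ 0 ∧ g = fun i j => PP k σ 0 β i j} =
      ((2 * k : ℕ) : ℝ≥0∞) := by
  have hfr : Module.finrank ℝ (Fin k → ℂ) = 2 * k := by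
    rw [finrank_pi_complex, Fintype.card_fin]
  apply le_antisymm
  · have h1 := (PP_contDiff k σ (fun β : Fin k → ℂ => β)
      (fun l => contDiff_apply ℝ ℂ l)).dimH_range_le
    rw [hfr] at h1
    refine (dimH_mono ?_).trans h1
    rintro g ⟨β, _, rfl⟩
    exact ⟨β, rfl⟩
  · refine le_trans ?_ ((pr_lip k (Fin k) (ri k σ z0) (ci k σ)).dimH_image_le _)
    have ho : IsOpen {y : Fin k → ℂ | y z0 ≠ 0} :=
      isOpen_ne_fun (continuous_apply z0) continuous_const
    have h2 : dimH {y : Fin k → ℂ | y z0 ≠ 0} = ((2 * k : ℕ) : ℝ≥0∞) := by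
      rw [Real.dimH_of_nonempty_interior, hfr]
      rw [ho.interior_eq]
      exact ⟨fun _ => 1, by simp⟩
    rw [← h2]
    apply dimH_mono
    intro y hy
    obtain ⟨β, hβ, h⟩ := surj k σ hσ z0 hz0 y hy
    exact ⟨_, ⟨β, by rw [hβ]; exact hy, rfl⟩, funext h⟩

lemma dim_S' (k σ : ℕ) (hσ : 2 ≤ σ) (z0 : Fin k) (hz0 : z0.val = 0) :
    dimH {g : Fin k → Fin k → ℂ | ∃ β : Fin k → ℂ, β z0 = 1 ∧ g = fun i j => PP k σ 0 β i j} =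
      ((2 * (k - 1) : ℕ) : ℝ≥0∞) := by
  have hfr : Module.finrank ℝ ({j : Fin k // j ≠ z0} → ℂ) = 2 * (k - 1) := by
    rw [finrank_pi_complex]
    simp
  apply le_antisymm
  · have h1 := (PP_contDiff k σ (fun (b : {j : Fin k // j ≠ z0} → ℂ) (l : Fin k) =>
      if h : l = z0 then (1 : ℂ) else b ⟨l, h⟩)
      (fun l => by
        by_cases h : l = z0
        · simp only [dif_pos h]; exact contDiff_const
        · simp only [dif_neg h]; exact contDiff_apply ℝ ℂ _)).dimH_range_le
    rw [hfr] at h1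
    refine (dimH_mono ?_).trans h1
    rintro g ⟨β, hβ, rfl⟩
    refine ⟨fun l => β l, ?_⟩
    have : (fun l : Fin k => if h : l = z0 then (1 : ℂ) else β l) = β := by
      funext l
      split_ifs with h
      · rw [h, hβ]
      · rfl
    simp only [this]
  · refine le_trans ?_ ((pr_lip k {j : Fin k // j ≠ z0} (fun j => ri k σ z0 j)
      (fun j => ci k σ j)).dimH_image_le _)
    rw [← hfr, ← Real.dimH_univ_eq_finrank]
    apply dimH_mono
    intro y _
    obtain ⟨β, hβ, h⟩ := surj k σ hσ z0 hz0
      (fun l : Fin k => if h : l = z0 then (1 : ℂ) else y ⟨l, h⟩) (by simp)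
    refine ⟨_, ⟨β, by rw [hβ]; simp, rfl⟩, ?_⟩
    funext l
    simp only [h, dif_neg l.2]


/-- For `ε` small enough and `2 ≤ σ ≤ k`: the entrywise limit
`G^σ = lim_{t→0} G_{λ^σ(t)z}` exists; the set `G^σ` (the image of `{β : β₁ ≠ 0}` under
the limit) is a subgroup of `GL(k,ℂ)` of complex dimension `k` (Hausdorff dimension
`2k`), contained in the stabiliser of the projective point `z_{λ^σ}`, and it contains a
subgroup of complex dimension `k−1` consisting of upper triangular unipotent matrices. -/
theorem limit_stabiliser_group (k : ℕ) (hk : 1 ≤ k) :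
    ∃ ε₀ : ℝ, 0 < ε₀ ∧ ε₀ ≤ 1 ∧ ∀ ε : ℝ, 0 < ε → ε < ε₀ → ∀ σ : ℕ, 2 ≤ σ → σ ≤ k →
      ∃ Glim : (Fin k → ℂ) → (Fin k → Fin k → ℂ),
        -- the entrywise limit exists
        (∀ β : Fin k → ℂ,
          Filter.Tendsto (fun t : ℝ => (fun i j : Fin k => Gent k ε σ t β i j))
            (nhdsWithin 0 (Set.Ioi 0)) (nhds (Glim β))) ∧
        ∃ S : Set (Fin k → Fin k → ℂ),
          S = {g | ∃ β : Fin k → ℂ, (∀ i : Fin k, (i : ℕ) = 0 → β i ≠ 0) ∧ g = Glim β} ∧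
          -- S is a subgroup of GL(k,ℂ) …
          (∀ g ∈ S, IsUnit (Matrix.of g)) ∧
          idFun k ∈ S ∧
          (∀ g ∈ S, ∀ h ∈ S, (fun i j => (Matrix.of g * Matrix.of h) i j) ∈ S) ∧
          (∀ g ∈ S, (fun i j => (Matrix.of g)⁻¹ i j) ∈ S) ∧
          -- … of complex dimension k …
          dimH S = ((2 * k : ℕ) : ℝ≥0∞) ∧
          -- … contained in the stabiliser of the projective point z_{λ^σ}
          (∀ g ∈ S, ∃ c : ℂ, c ≠ 0 ∧
            actV (Matrix.of g) (zLamVec k σ) = c • zLamVec k σ) ∧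
          -- and S contains a (k−1)-dimensional subgroup of the standard maximal
          -- unipotent subgroup of SL(k,ℂ)
          ∃ S' : Set (Fin k → Fin k → ℂ), S' ⊆ S ∧
            (∀ g ∈ S', (∀ i : Fin k, g i i = 1) ∧ ∀ i j : Fin k, j < i → g i j = 0) ∧
            idFun k ∈ S' ∧
            (∀ g ∈ S', ∀ h ∈ S', (fun i j => (Matrix.of g * Matrix.of h) i j) ∈ S') ∧
            (∀ g ∈ S', (fun i j => (Matrix.of g)⁻¹ i j) ∈ S') ∧
            dimH S' = ((2 * (k - 1) : ℕ) : ℝ≥0∞) := by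
  refine ⟨1, one_pos, le_rfl, ?_⟩
  intro ε hε _ σ hσ _
  obtain ⟨z0, hz0⟩ : ∃ z0 : Fin k, z0.val = 0 := ⟨⟨0, hk⟩, rfl⟩
  have hz : ∀ β : Fin k → ℂ, (∀ i : Fin k, (i : ℕ) = 0 → β i ≠ 0) ↔ β z0 ≠ 0 := by
    intro β
    refine ⟨fun h => h z0 hz0, fun h i hi => ?_⟩
    rw [show i = z0 from Fin.ext (by omega)]
    exact h
  have hid : idFun k = fun i j => PP k σ 0 (ee k) i j := by
    funext i j
    rw [PP_id k σ hσ 0 z0 hz0, Matrix.one_apply]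
    rfl
  have he : ee k z0 = 1 := by simp [ee, hz0]
  have hof : ∀ β, Matrix.of (fun i j => PP k σ 0 β i j) = PP k σ 0 β := fun β => rfl
  have hinv : ∀ β : Fin k → ℂ, β z0 ≠ 0 → ∃ γ : Fin k → ℂ, β z0 * γ z0 = 1 ∧
      PP k σ 0 β * PP k σ 0 γ = 1 := by
    intro β hβ
    obtain ⟨γ, hγ⟩ := DEL_inv k σ z0 hz0 β hβ
    refine ⟨γ, ?_, ?_⟩
    · rw [← DEL_zero k σ z0 hz0, hγ, he]
    · rw [PP_mul_zero k σ hσ, hγ, PP_id k σ hσ 0 z0 hz0]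
  have hunit : ∀ β : Fin k → ℂ, β z0 ≠ 0 → IsUnit (PP k σ 0 β) := by
    intro β hβ
    obtain ⟨γ, _, h⟩ := hinv β hβ
    exact IsUnit.of_mul_eq_one _ h
  refine ⟨fun β i j => PP k σ 0 β i j, fun β => Gent_tendsto k ε hε σ hσ β, _, rfl, ?_⟩
  simp only [hz]
  refine ⟨?_, ?_, ?_, ?_, dim_S k σ hσ z0 hz0, ?_,
    {g | ∃ β : Fin k → ℂ, β z0 = 1 ∧ g = fun i j => PP k σ 0 β i j},
    ?_, ?_, ?_, ?_, ?_, dim_S' k σ hσ z0 hz0⟩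
  · rintro g ⟨β, hβ, rfl⟩
    exact hunit β hβ
  · exact ⟨ee k, by rw [he]; exact one_ne_zero, hid⟩
  · rintro g ⟨β, hβ, rfl⟩ h ⟨γ, hγ, rfl⟩
    refine ⟨DEL k σ 0 β γ, ?_, ?_⟩
    · rw [DEL_zero k σ z0 hz0]
      exact mul_ne_zero hβ hγ
    · simp only [hof, PP_mul_zero k σ hσ]
  · rintro g ⟨β, hβ, rfl⟩
    obtain ⟨γ, h1, h2⟩ := hinv β hβ
    refine ⟨γ, right_ne_zero_of_mul_eq_one h1, ?_⟩
    simp only [hof, Matrix.inv_eq_right_inv h2]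
  · rintro g ⟨β, hβ, rfl⟩
    refine ⟨(PP k σ 0 β).det, ?_, PP_stab k σ hσ β⟩
    exact ((Matrix.isUnit_iff_isUnit_det _).mp (hunit β hβ)).ne_zero
  · rintro g ⟨β, hβ, rfl⟩
    exact ⟨β, by rw [hβ]; exact one_ne_zero, rfl⟩
  · rintro g ⟨β, hβ, rfl⟩
    refine ⟨fun i => ?_, fun i j hij => PP_lower k σ 0 β i j hij⟩
    simp only [PP_diag k σ hσ 0 z0 hz0, hβ, one_pow]
  · exact ⟨ee k, he, hid⟩
  · rintro g ⟨β, hβ, rfl⟩ h ⟨γ, hγ, rfl⟩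
    refine ⟨DEL k σ 0 β γ, ?_, ?_⟩
    · rw [DEL_zero k σ z0 hz0, hβ, hγ, one_mul]
    · simp only [hof, PP_mul_zero k σ hσ]
  · rintro g ⟨β, hβ, rfl⟩
    obtain ⟨γ, h1, h2⟩ := hinv β (by rw [hβ]; exact one_ne_zero)
    refine ⟨γ, by rwa [hβ, one_mul] at h1, ?_⟩
    simp only [hof, Matrix.inv_eq_right_inv h2]

end JetPaper
end

section
/- Fix 0 < ε < 1 small enough and 2 ≤ σ ≤ k. Under the substitution α_i = t^{n_i^σ} β_i (i = 1,…,k), every entry of the matrix G_{λ^σ(t)z}, namely t^{λ^σ_i − λ^σ_j} p_{i,j}(α) in position (i,j), becomes a polynomial in t with coefficients in ℂ[β_1,…,β_k]; in particular the entrywise limit lim_{t→0} G_{λ^σ(t)z}(β_1,…,β_k) exists. -/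
open scoped BigOperators

namespace JetPaper

/-- Telescoping bound: moving up from `b` by steps `a t` costs at most the sum of the
corresponding maxima. -/
theorem lamW_telescope (k : ℕ) (ε : ℝ) (σ : ℕ) (b : ℕ) (hb : 1 ≤ b) (m : ℕ) :
    ∀ a : Fin m → Fin k, b + ∑ t, (a t).val ≤ k →
      lamW ε σ (b + ∑ t, (a t).val) - lamW ε σ b ≤ ∑ t, nmax k ε σ ((a t).val + 1) := by
  induction m with
  | zero => intro a _; simp
  | succ m ih =>
    intro a h
    rw [Fin.sum_univ_castSucc] at h ⊢
    rw [Fin.sum_univ_castSucc (f := fun t => nmax k ε σ ((a t).val + 1))]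
    have h1 := ih (fun t => a t.castSucc) (by omega)
    set S := ∑ t : Fin m, (a t.castSucc).val with hS
    have h2 : lamW ε σ (b + S + ((a (Fin.last m)).val + 1) - 1) - lamW ε σ (b + S)
        ≤ nmax k ε σ ((a (Fin.last m)).val + 1) := by
      unfold nmax
      exact Finset.le_sup' (fun j => lamW ε σ (j + ((a (Fin.last m)).val + 1) - 1) - lamW ε σ j)
        (Finset.mem_Icc.mpr ⟨by omega, by omega⟩)
    have e : b + S + ((a (Fin.last m)).val + 1) - 1 = b + (S + (a (Fin.last m)).val) := by omega
    rw [e] at h2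
    linarith

/-- The polynomial expression of each entry. -/
theorem Gent_poly (k : ℕ) (ε : ℝ) (σ : ℕ) (i j : Fin k) :
    ∃ s : Finset ℝ, (∀ c ∈ s, 0 ≤ c) ∧
      ∃ coef : ℝ → MvPolynomial (Fin k) ℂ,
        ∀ t : ℝ, 0 < t → ∀ β : Fin k → ℂ,
          Gent k ε σ t β i j =
            ∑ c ∈ s, ((t ^ c : ℝ) : ℂ) * MvPolynomial.eval β (coef c) := by
  classical
  let A : Finset (Fin (i.val + 1) → Fin k) :=
    Finset.univ.filter (fun a => (∑ t, ((a t).val + 1)) = j.val + 1)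
  let w : (Fin (i.val + 1) → Fin k) → ℝ := fun a =>
    (lamW ε σ ((i : ℕ) + 1) - lamW ε σ ((j : ℕ) + 1)) + ∑ t, nmax k ε σ ((a t).val + 1)
  refine ⟨A.image w, ?_, fun c => ∑ a ∈ A with w a = c, ∏ t, MvPolynomial.X (a t), ?_⟩
  · intro c hc
    obtain ⟨a, ha, rfl⟩ := Finset.mem_image.mp hc
    have hs : (∑ t, ((a t).val + 1)) = j.val + 1 := (Finset.mem_filter.mp ha).2
    rw [Finset.sum_add_distrib] at hs
    simp only [Finset.sum_const, Finset.card_univ, Fintype.card_fin, smul_eq_mul, mul_one] at hs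
    have hj := j.isLt
    have h := lamW_telescope k ε σ (i.val + 1) (by omega) (i.val + 1) a (by omega)
    rw [show i.val + 1 + ∑ t, (a t).val = j.val + 1 by omega] at h
    simp only [w]
    linarith
  · intro t ht β
    have h1 : Gent k ε σ t β i j = ∑ a ∈ A, ((t ^ w a : ℝ) : ℂ) * ∏ r, β (a r) := by
      simp only [Gent, repMat, A, Finset.sum_filter, Finset.mul_sum]
      refine Finset.sum_congr rfl fun a _ => ?_
      split_ifs
      · simp only [w]
        rw [Finset.prod_mul_distrib, Real.rpow_add ht, Real.rpow_sum_of_pos ht]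
        push_cast
        ring
      · simp
    rw [h1, ← Finset.sum_fiberwise_of_maps_to (t := A.image w) (g := w)
      (fun a ha => Finset.mem_image_of_mem w ha)]
    refine Finset.sum_congr rfl fun c _ => ?_
    simp only [map_sum, map_prod, MvPolynomial.eval_X, Finset.mul_sum]
    refine Finset.sum_congr rfl fun a ha => ?_
    rw [(Finset.mem_filter.mp ha).2]

/-- For `ε` small enough and `2 ≤ σ ≤ k`: under the substitution
`α_i = t^{n_i^σ} β_i`, every entry of the matrix `G_{λ^σ(t)z}` becomes a polynomial
expression in nonnegative powers of `t` with coefficients in `ℂ[β₁,…,β_k]`; in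
particular the entrywise limit as `t → 0⁺` exists. -/
theorem substituted_stabiliser_polynomial (k : ℕ) (hk : 1 ≤ k) :
    ∃ ε₀ : ℝ, 0 < ε₀ ∧ ε₀ ≤ 1 ∧ ∀ ε : ℝ, 0 < ε → ε < ε₀ → ∀ σ : ℕ, 2 ≤ σ → σ ≤ k →
      ∀ i j : Fin k,
        (∃ s : Finset ℝ, (∀ c ∈ s, 0 ≤ c) ∧
          ∃ coef : ℝ → MvPolynomial (Fin k) ℂ,
            ∀ t : ℝ, 0 < t → ∀ β : Fin k → ℂ,
              Gent k ε σ t β i j =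
                ∑ c ∈ s, ((t ^ c : ℝ) : ℂ) * MvPolynomial.eval β (coef c)) ∧
        (∀ β : Fin k → ℂ, ∃ L : ℂ,
          Filter.Tendsto (fun t : ℝ => Gent k ε σ t β i j)
            (nhdsWithin 0 (Set.Ioi 0)) (nhds L)) := by
  refine ⟨1, one_pos, le_rfl, fun ε _ _ σ _ _ i j => ?_⟩
  have h := Gent_poly k ε σ i j
  refine ⟨h, fun β => ?_⟩
  obtain ⟨s, hs, coef, hG⟩ := h
  refine ⟨∑ c ∈ s, (((0 : ℝ) ^ c : ℝ) : ℂ) * MvPolynomial.eval β (coef c), ?_⟩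
  have hlim : Filter.Tendsto
      (fun t : ℝ => ∑ c ∈ s, ((t ^ c : ℝ) : ℂ) * MvPolynomial.eval β (coef c))
      (nhdsWithin 0 (Set.Ioi 0))
      (nhds (∑ c ∈ s, (((0 : ℝ) ^ c : ℝ) : ℂ) * MvPolynomial.eval β (coef c))) := by
    refine tendsto_finsetSum s fun c hc => ?_
    refine Filter.Tendsto.mul_const _ ?_
    have h0 : Filter.Tendsto (fun t : ℝ => t ^ c) (nhdsWithin 0 (Set.Ioi 0))
        (nhds ((0 : ℝ) ^ c)) :=
      (Real.continuousAt_rpow_const 0 c (Or.inr (hs c hc))).tendsto.mono_left nhdsWithin_le_nhds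
    exact (Complex.continuous_ofReal.tendsto _).comp h0
  refine hlim.congr' ?_
  filter_upwards [self_mem_nhdsWithin] with t ht
  exact (hG t ht β).symm

end JetPaper
end
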